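/- arXiv:1311.3354 — 4 statements merged into one kernel-verified Lean document; each statement's English description precedes it below -/
import Mathlib

section
/- Let b ≥ 2 be an integer and let s ∈ ℂ satisfy s^{2b} = 1. In the polynomial ring R = ℂ[u,v,x,y] define the 2×2 matrix d¹ = [[x − s²u², v + s·u·y], [v − s·u·y, (Σ_{i=0}^{b−1} x^i (s·u)^{2(b−1−i)}) + y²]]. Then det(d¹) = x^b + x·y² − u^{2b} − v². Consequently, setting d⁰ equal to the adjugate of d¹, the pair (d⁰, d¹) is a rank-two matrix factorisation of V^{(D_{b+1})}(x,y) − V^{(A_{2b−1})}(u,v) = x^b + x·y² − u^{2b} − v². Moreover, each entry of d¹ is weighted homogeneous for the weights w(u) = 1/b, w(v) = 1, w(x) = 2/b, w(y) = 1 − 1/b, the entries having degrees [[2/b, 1], [1, 2 − 2/b]] respectively. -/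
/-! The determinant is a telescoping computation: the sum in the lower right entry is the
geometric sum `∑ x^i t^(b-1-i)` at `t = (s u)²`, so multiplying it by `x - t` gives
`x^b - (s u)^(2b) = x^b - u^(2b)` because `s^(2b) = 1`; the terms `± s² u² y²` cancel.
The factorisation identities are then the defining property of the adjugate. For homogeneity,
`WHom` is deduced from Mathlib's `IsWeightedHomogeneous`, which is closed under sums (of equal
degree), products and powers; every summand is a product of
variables and constants of the stated weight. -/

open MvPolynomial

noncomputable section

/-- The polynomial ring `R = ℂ[u,v,x,y]`. -/
abbrev R4 : Type := MvPolynomial (Fin 4) ℂ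

def u : R4 := X 0
def v : R4 := X 1
def x : R4 := X 2
def y : R4 := X 3

/-- A polynomial is weighted homogeneous of degree `q` for the weights `w`. -/
def WHom (w : Fin 4 → ℚ) (q : ℚ) (p : R4) : Prop :=
  ∀ m ∈ p.support, (∑ i : Fin 4, (m i : ℚ) * w i) = q

/-- The matrix `d¹` of the D-type orbifold equivalence. -/
def dD (b : ℕ) (s : ℂ) : Matrix (Fin 2) (Fin 2) R4 :=
  !![x - C s ^ 2 * u ^ 2, v + C s * u * y;
     v - C s * u * y, (∑ i ∈ Finset.range b, x ^ i * (C s * u) ^ (2 * (b - 1 - i))) + y ^ 2]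

/-- `WHom` follows from Mathlib's notion of weighted homogeneity. -/
lemma WHom.of_isWeightedHomogeneous {w : Fin 4 → ℚ} {q : ℚ} {p : R4}
    (h : IsWeightedHomogeneous w p q) : WHom w q p := by
  intro m hm
  have h1 := h (mem_support_iff.mp hm)
  rw [Finsupp.weight_apply, Finsupp.sum_fintype _ _ (by simp)] at h1
  simpa [nsmul_eq_mul] using h1

lemma det_dD (b : ℕ) (s : ℂ) (hs : s ^ (2 * b) = 1) :
    (dD b s).det = x ^ b + x * y ^ 2 - u ^ (2 * b) - v ^ 2 := by
  have hgeom := (Commute.all x ((C s * u) ^ 2)).geom_sum₂_mul b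
  simp only [← pow_mul] at hgeom
  have hpow : (C s * u : R4) ^ (2 * b) = u ^ (2 * b) := by
    rw [mul_pow, ← C_pow, hs, C_1, one_mul]
  rw [hpow] at hgeom
  rw [dD, Matrix.det_fin_two_of]
  linear_combination hgeom

theorem stmt0 (b : ℕ) (hb : 2 ≤ b) (s : ℂ) (hs : s ^ (2 * b) = 1) :
    (dD b s).det = x ^ b + x * y ^ 2 - u ^ (2 * b) - v ^ 2 ∧
    dD b s * (dD b s).adjugate
      = (x ^ b + x * y ^ 2 - u ^ (2 * b) - v ^ 2) • (1 : Matrix (Fin 2) (Fin 2) R4) ∧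
    (dD b s).adjugate * dD b s
      = (x ^ b + x * y ^ 2 - u ^ (2 * b) - v ^ 2) • (1 : Matrix (Fin 2) (Fin 2) R4) ∧
    ∀ i j, WHom ![1 / (b : ℚ), 1, 2 / (b : ℚ), 1 - 1 / (b : ℚ)]
      (!![2 / (b : ℚ), 1; 1, 2 - 2 / (b : ℚ)] i j) (dD b s i j) := by
  have hdet := det_dD b s hs
  refine ⟨hdet, by rw [Matrix.mul_adjugate, hdet], by rw [Matrix.adjugate_mul, hdet], ?_⟩
  have hb0 : (b : ℚ) ≠ 0 := by positivity
  set w : Fin 4 → ℚ := ![1 / (b : ℚ), 1, 2 / (b : ℚ), 1 - 1 / (b : ℚ)] with hw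
  have hu : IsWeightedHomogeneous w u (1 / (b : ℚ)) := isWeightedHomogeneous_X ℂ w 0
  have hv : IsWeightedHomogeneous w v 1 := isWeightedHomogeneous_X ℂ w 1
  have hx : IsWeightedHomogeneous w x (2 / (b : ℚ)) := isWeightedHomogeneous_X ℂ w 2
  have hy : IsWeightedHomogeneous w y (1 - 1 / (b : ℚ)) := isWeightedHomogeneous_X ℂ w 3
  have hsu : IsWeightedHomogeneous w (C s * u) (1 / (b : ℚ)) := by
    simpa using (isWeightedHomogeneous_C w s).mul hu
  have hsuy : IsWeightedHomogeneous w (C s * u * y) 1 := by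
    simpa using hsu.mul hy
  have hsu2 : IsWeightedHomogeneous w (C s ^ 2 * u ^ 2) (2 / (b : ℚ)) := by
    rw [← mul_pow]
    convert hsu.pow 2 using 1
    simp [div_eq_mul_inv]
  have hy2 : IsWeightedHomogeneous w (y ^ 2) (2 - 2 / (b : ℚ)) := by
    convert hy.pow 2 using 1
    simp only [nsmul_eq_mul]
    push_cast
    ring
  have hsum : IsWeightedHomogeneous w
      (∑ i ∈ Finset.range b, x ^ i * (C s * u) ^ (2 * (b - 1 - i))) (2 - 2 / (b : ℚ)) := by
    refine IsWeightedHomogeneous.sum _ _ _ fun i hi => ?_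
    obtain ⟨k, rfl⟩ : ∃ k, b = i + k + 1 := ⟨b - 1 - i, by have := Finset.mem_range.mp hi; omega⟩
    have hk : i + k + 1 - 1 - i = k := by omega
    rw [hk]
    convert (hx.pow i).mul (hsu.pow (2 * k)) using 1
    simp only [nsmul_eq_mul]
    field_simp
    push_cast
    ring
  intro i j
  apply WHom.of_isWeightedHomogeneous
  fin_cases i <;> fin_cases j
  · exact (weightedHomogeneousSubmodule ℂ w _).sub_mem hx hsu2
  · exact hv.add hsuy
  · exact (weightedHomogeneousSubmodule ℂ w _).sub_mem hv hsuy
  · exact hsum.add hy2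
end
end

section
/- Let b ≥ 2 be an integer and let s ∈ ℂ satisfy s^{2b} = 1. In R = ℂ[u,v,x,y] let d¹ = [[x − s²u², v + s·u·y], [v − s·u·y, (Σ_{i=0}^{b−1} x^i (s·u)^{2(b−1−i)}) + y²]], let d⁰ be the adjugate of d¹, let d = [[0, d¹], [d⁰, 0]] be the 4×4 twisted differential, and set S = str(∂_u d · ∂_v d · ∂_x d · ∂_y d) ∈ R. Then for all natural numbers c, e, the coefficient of the monomial u^{2b−2} v⁰ x^c y^e in S equals 4b·s^{2b−1} if c = e = 0, and equals 0 otherwise. Equivalently, the right quantum dimension of this matrix factorisation of x^b + x·y² − u^{2b} − v² equals −1/s; in particular it is non-zero. -/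
/-!
Write `T = ∑ xⁱ (su)^(2(b-1-i))`. Multiplying out the `2 × 2` blocks gives
`S = -4 s y² + 4 s³ u² ∂ₓT + 2 s u ∂ᵤT` (`SD_eq`). As `b ≥ 2`, the first summand has no monomial
of `u`-degree `2b - 2`. In `∂ₓT` only the term `i = 1` contributes to that degree, giving
`4 s^(2b-1)`, and in `u ∂ᵤT` only the term `i = 0`, giving `4 (b-1) s^(2b-1)`; neither involves
`x` or `y`. The sum is `4 b s^(2b-1)`, and `s^(2b-1) = 1/s` because `s^(2b) = 1`.
-/

open MvPolynomial

noncomputable section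

/-- The exponent vector of the monomial `u^a v^b x^c y^e`. -/
def mon (a b c e : ℕ) : Fin 4 →₀ ℕ :=
  Finsupp.single 0 a + Finsupp.single 1 b + Finsupp.single 2 c + Finsupp.single 3 e

/-- Entrywise partial derivative of a matrix of polynomials. -/
def pd {m n : Type} (i : Fin 4) (M : Matrix m n R4) : Matrix m n R4 :=
  M.map fun p => pderiv i p

/-- The supertrace of a `2r × 2r` block matrix. -/
def str {r : ℕ} (M : Matrix (Fin r ⊕ Fin r) (Fin r ⊕ Fin r) R4) : R4 :=
  Matrix.trace M.toBlocks₁₁ - Matrix.trace M.toBlocks₂₂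

/-- The twisted differential `d = [[0, d¹], [d⁰, 0]]` with `d⁰` the adjugate of `d¹`. -/
def DD (b : ℕ) (s : ℂ) : Matrix (Fin 2 ⊕ Fin 2) (Fin 2 ⊕ Fin 2) R4 :=
  Matrix.fromBlocks 0 (dD b s) (dD b s).adjugate 0

/-- The supertrace `S = str(∂_u d · ∂_v d · ∂_x d · ∂_y d)`. -/
def SD (b : ℕ) (s : ℂ) : R4 :=
  str (pd 0 (DD b s) * pd 1 (DD b s) * pd 2 (DD b s) * pd 3 (DD b s))

/-- The part of the last entry of `d¹` that involves only `u` and `x`. -/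
def TD (b : ℕ) (s : ℂ) : R4 :=
  ∑ i ∈ Finset.range b, x ^ i * (C s * u) ^ (2 * (b - 1 - i))

theorem mon_inj (a b c e a' b' c' e' : ℕ) :
    mon a b c e = mon a' b' c' e' ↔ a = a' ∧ b = b' ∧ c = c' ∧ e = e' := by
  constructor
  · intro h
    have h0 := DFunLike.congr_fun h 0
    have h1 := DFunLike.congr_fun h 1
    have h2 := DFunLike.congr_fun h 2
    have h3 := DFunLike.congr_fun h 3
    simp [mon] at h0 h1 h2 h3
    exact ⟨h0, h1, h2, h3⟩
  · rintro ⟨rfl, rfl, rfl, rfl⟩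
    rfl

theorem C_mul_eq_monomial (k : ℂ) (a b c e : ℕ) :
    C k * (u ^ a * v ^ b * x ^ c * y ^ e) = monomial (mon a b c e) k := by
  simp only [u, v, x, y, mon, X_pow_eq_monomial, monomial_mul, C_mul_monomial, mul_one]

theorem coeff_C_mul_mon (k : ℂ) (a b c e a' b' c' e' : ℕ) :
    coeff (mon a b c e) (C k * (u ^ a' * v ^ b' * x ^ c' * y ^ e')) =
      if a' = a ∧ b' = b ∧ c' = c ∧ e' = e then k else 0 := by
  rw [C_mul_eq_monomial, coeff_monomial]
  simp only [mon_inj]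

theorem C_four : (C 4 : R4) = 4 := map_ofNat C 4

theorem pderiv_v_TD (b : ℕ) (s : ℂ) : pderiv 1 (TD b s) = 0 := by
  simp [TD, x, u, pderiv_X]

theorem pderiv_y_TD (b : ℕ) (s : ℂ) : pderiv 3 (TD b s) = 0 := by
  simp [TD, x, u, pderiv_X]

/-- Both diagonal blocks of the product of the four derivatives contribute the same amount to the
supertrace, up to the sign that the supertrace compensates. -/
theorem SD_eq (b : ℕ) (s : ℂ) :
    SD b s = -(4 * C s * y ^ 2) + 4 * C s ^ 3 * u ^ 2 * pderiv 2 (TD b s)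
      + 2 * C s * u * pderiv 0 (TD b s) := by
  have hd : dD b s = !![x - C s ^ 2 * u ^ 2, v + C s * u * y;
     v - C s * u * y, TD b s + y ^ 2] := rfl
  have h1 := pderiv_v_TD b s
  have h3 := pderiv_y_TD b s
  rw [SD, DD, hd, Matrix.adjugate_fin_two_of]
  generalize TD b s = T at *
  simp only [pd, str, Matrix.fromBlocks_map, Matrix.fromBlocks_multiply,
    Matrix.toBlocks_fromBlocks₁₁, Matrix.toBlocks_fromBlocks₂₂]
  simp [Matrix.trace_fin_two, Matrix.mul_apply, Fin.sum_univ_two, u, v, x, y, pderiv_X, h1, h3]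
  ring

/-- The operator `u ∂_u` scales each monomial of `TD` by its degree in `u`. -/
theorem u_pderiv_TD (b : ℕ) (s : ℂ) :
    2 * C s * u * pderiv 0 (TD b s) = ∑ i ∈ Finset.range b,
      C (4 * (b - 1 - i : ℕ) * s ^ (2 * (b - 1 - i) + 1)) *
        (u ^ (2 * (b - 1 - i)) * v ^ 0 * x ^ i * y ^ 0) := by
  rw [TD, map_sum, Finset.mul_sum]
  refine Finset.sum_congr rfl fun i _ => ?_
  generalize b - 1 - i = k
  rcases k with _ | k
  · simp [x, pderiv_X]
  · have h : 2 * (k + 1) - 1 = 2 * k + 1 := by omega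
    simp [x, u, pderiv_X, h, C_four]
    ring

theorem u_sq_pderiv_TD (b : ℕ) (s : ℂ) :
    4 * C s ^ 3 * u ^ 2 * pderiv 2 (TD b s) = ∑ i ∈ Finset.range b,
      C (4 * (i : ℂ) * s ^ (2 * (b - 1 - i) + 3)) *
        (u ^ (2 * (b - 1 - i) + 2) * v ^ 0 * x ^ (i - 1) * y ^ 0) := by
  rw [TD, map_sum, Finset.mul_sum]
  refine Finset.sum_congr rfl fun i _ => ?_
  generalize b - 1 - i = k
  simp [x, u, pderiv_X, C_four]
  ring

theorem coeff_SD (b : ℕ) (hb : 2 ≤ b) (s : ℂ) (c e : ℕ) :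
    coeff (mon (2 * b - 2) 0 c e) (SD b s)
      = if c = 0 ∧ e = 0 then (4 * b : ℂ) * s ^ (2 * b - 1) else 0 := by
  have hy : (4 * C s * y ^ 2 : R4) = C (4 * s) * (u ^ 0 * v ^ 0 * x ^ 0 * y ^ 2) := by
    simp [C_four]
  rw [SD_eq, u_pderiv_TD, u_sq_pderiv_TD, hy]
  simp only [coeff_add, coeff_neg, coeff_sum, coeff_C_mul_mon]
  -- The `y²` term has `u`-degree `0 < 2b - 2`.
  rw [if_neg (by omega)]
  -- Only `i = 1` gives `u`-degree `2b - 2` in the first sum, only `i = 0` in the second.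
  rw [Finset.sum_eq_single_of_mem 1 (by simp; omega),
    Finset.sum_eq_single_of_mem 0 (by simp; omega)]
  · obtain ⟨k, rfl⟩ := Nat.exists_eq_add_of_le hb
    have e1 : 2 * (2 + k - 1 - 1) + 2 = 2 * (2 + k) - 2 := by omega
    have e2 : 2 * (2 + k - 1 - 0) = 2 * (2 + k) - 2 := by omega
    have e3 : 2 * (2 + k - 1 - 1) + 3 = 2 * (2 + k) - 1 := by omega
    have e4 : 2 * (2 + k) - 2 + 1 = 2 * (2 + k) - 1 := by omega
    have e5 : 2 + k - 1 - 0 = k + 1 := by omega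
    rw [e1, e2, e3, e4, e5]
    by_cases h : c = 0 ∧ e = 0
    · obtain ⟨rfl, rfl⟩ := h
      simp
      ring
    · rw [if_neg h, if_neg (by omega), if_neg (by omega)]
      simp
  · intro i hi h0
    rw [Finset.mem_range] at hi
    rw [if_neg (by omega)]
  · intro i hi h1
    rw [Finset.mem_range] at hi
    rw [if_neg (by omega)]

theorem stmt1 (b : ℕ) (hb : 2 ≤ b) (s : ℂ) (hs : s ^ (2 * b) = 1) :
    (∀ c e : ℕ, coeff (mon (2 * b - 2) 0 c e) (SD b s)
        = if c = 0 ∧ e = 0 then (4 * b : ℂ) * s ^ (2 * b - 1) else 0) ∧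
    -(1 / (4 * (b : ℂ))) * coeff (mon (2 * b - 2) 0 0 0) (SD b s) = -1 / s := by
  refine ⟨coeff_SD b hb s, ?_⟩
  rw [coeff_SD b hb s 0 0, if_pos ⟨rfl, rfl⟩]
  have hs0 : s ≠ 0 := by
    rintro rfl
    rw [zero_pow (by omega)] at hs
    exact zero_ne_one hs
  have hb0 : (b : ℂ) ≠ 0 := by
    exact_mod_cast (by omega : b ≠ 0)
  have hpow : s ^ (2 * b - 1) * s = 1 := by
    rw [← pow_succ, ← hs]
    congr 1
    omega
  rw [eq_div_iff hs0]
  field_simp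
  linear_combination -hpow
end
end

section
/- Let b ≥ 2 be an integer and f = x^b + x·y² − u^{2b} − v² ∈ R = ℂ[u,v,x,y]. Let (d⁰, d¹) be a pair of 2×2 matrices over R with d¹·d⁰ = f·1 and d⁰·d¹ = f·1, and suppose: (grading) there exist rational numbers α₁, α₂, β₁, β₂ such that for all i, j the (i,j) entry of d¹ is weighted homogeneous of degree 1 + α_j − β_i and the (i,j) entry of d⁰ is weighted homogeneous of degree 1 + β_j − α_i, for the weights w(u) = 1/b, w(v) = 1, w(x) = 2/b, w(y) = 1 − 1/b; (boundary) substituting u = 0 gives d¹|_{u=0} = [[x, v], [v, x^{b−1} + y²]] and d⁰|_{u=0} = [[x^{b−1} + y², −v], [−v, x]]; (non-degeneracy) writing d = [[0, d¹], [d⁰, 0]], the coefficient of u^{2b−2}v⁰ (coefficient extraction in the variables u, v) of str(∂_u d · ∂_v d · ∂_x d · ∂_y d) is non-zero, i.e. the right quantum dimension is non-zero. Then there exist s ∈ ℂ with s^{2b} = 1 and invertible 2×2 matrices P, Q over R such that P·d¹·Q = [[x − s²u², v + s·u·y], [v − s·u·y, (Σ_{i=0}^{b−1} x^i (s·u)^{2(b−1−i)})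 + y²]]; in particular (d⁰, d¹) is isomorphic as a graded matrix factorisation to the factorisation X_u of equation (2.8) of the paper for some choice of s. -/
/-!
By the grading and the boundary condition, `d1 0 0 = x + a u² + c u y` (with `c = 0` unless `b = 2`)
and the off-diagonal entries are `v + p u y + G(u, x)` and `v + p' u y + G'(u, x)`
(`form_x`, `form_v`). Since `f` does not vanish on the locus `d0 1 1 = 0`, the factorisation forces
`d0 1 1 = d1 0 0`, hence `d0` is the adjugate of `d1` and `det d1 = f`. Restricting this identity to
the locus `d1 0 0 = 0`, i.e. substituting `x ↦ -a u² - c u y`, turns `G`, `G'` into multiples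
`g u^b`, `g' u^b`, and comparing coefficients (`scalars`) gives
`c = 0`, `p' = -p`, `g' = -g`, `a = -p²`, `p g = 0` and `g² = p^(2b) - 1`.

If `p = 0`, the supertrace is `2y (∂ᵤ (d1 1 0) - ∂ᵤ (d1 0 1))`, whose coefficient at `u^(2b-2)`
vanishes for degree reasons, contradicting non-degeneracy. Otherwise `g = 0` and `s = p` satisfies
`s^(2b) = 1`; one row and one column operation reduce the off-diagonal entries modulo `d1 0 0` to
`v ± s u y`, and the remaining entry is determined by the determinant.
-/

open MvPolynomial

noncomputable section

/-- The substitution `u ↦ 0` (keeping `v, x, y`). -/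
def setU0 : R4 →ₐ[ℂ] R4 := aeval fun i => if i = 0 then 0 else X i

/-- The weight of an exponent vector, multiplied by `b` so that it is a natural number. -/
def wt (b : ℕ) (m : Fin 4 →₀ ℕ) : ℕ := m 0 + b * m 1 + 2 * m 2 + (b - 1) * m 3

/-- The substitution `x ↦ ξ` (keeping `u, v, y`). -/
def subX (ξ : R4) : R4 →ₐ[ℂ] R4 := aeval ![X 0, X 1, ξ, X 3]

lemma subX_u (ξ : R4) : subX ξ u = u := by simp [subX, u]
lemma subX_v (ξ : R4) : subX ξ v = v := by simp [subX, v]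
lemma subX_x (ξ : R4) : subX ξ x = ξ := by simp [subX, x]
lemma subX_y (ξ : R4) : subX ξ y = y := by simp [subX, y]
lemma subX_C (ξ : R4) (a : ℂ) : subX ξ (C a) = C a := by simp [subX]

lemma sub_subX_dvd (ξ p : R4) : x - ξ ∣ p - subX ξ p := by
  rw [← Ideal.mem_span_singleton, ← Ideal.Quotient.mk_eq_mk_iff_sub_mem]
  have h : (Ideal.Quotient.mkₐ ℂ (Ideal.span {x - ξ}))
      = (Ideal.Quotient.mkₐ ℂ (Ideal.span {x - ξ})).comp (subX ξ) := by
    apply MvPolynomial.algHom_ext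
    intro i
    fin_cases i
    · simp [subX]
    · simp [subX]
    · simp only [AlgHom.comp_apply, Ideal.Quotient.mkₐ_eq_mk]
      rw [Ideal.Quotient.mk_eq_mk_iff_sub_mem, Ideal.mem_span_singleton]
      simp [subX, x]
    · simp [subX]
  exact DFunLike.congr_fun h p

lemma coeff_setU0 (p : R4) (m : Fin 4 →₀ ℕ) (hm : m 0 = 0) :
    coeff m p = coeff m (setU0 p) := by
  have hd : (X 0 : R4) ∣ p - setU0 p := by
    rw [← Ideal.mem_span_singleton, ← Ideal.Quotient.mk_eq_mk_iff_sub_mem]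
    have h : (Ideal.Quotient.mkₐ ℂ (Ideal.span {(X 0 : R4)}))
        = (Ideal.Quotient.mkₐ ℂ (Ideal.span {(X 0 : R4)})).comp setU0 := by
      apply MvPolynomial.algHom_ext
      intro i
      by_cases hi : i = 0
      · subst hi
        simp only [AlgHom.comp_apply, Ideal.Quotient.mkₐ_eq_mk]
        rw [Ideal.Quotient.mk_eq_mk_iff_sub_mem, Ideal.mem_span_singleton]
        simp [setU0]
      · simp [setU0, hi]
    exact DFunLike.congr_fun h p
  obtain ⟨h, hh⟩ := hd
  have := congrArg (coeff m) hh
  rw [coeff_sub, coeff_X_mul'] at this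
  simp [hm] at this
  linear_combination this

/-- A weighted homogeneous polynomial has the degree of any monomial that survives at `u = 0`. -/
lemma wt_eq {b : ℕ} (hb : 2 ≤ b) {q : ℚ} {p : R4}
    (hp : WHom ![1 / (b : ℚ), 1, 2 / (b : ℚ), 1 - 1 / (b : ℚ)] q p)
    (m' : Fin 4 →₀ ℕ) (h0 : m' 0 = 0) (hm' : coeff m' (setU0 p) ≠ 0)
    (m : Fin 4 →₀ ℕ) (hm : coeff m p ≠ 0) : wt b m = wt b m' := by
  have hb0 : (b : ℚ) ≠ 0 := by positivity
  have key : ∀ n : Fin 4 →₀ ℕ, coeff n p ≠ 0 → (wt b n : ℚ) = b * q := by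
    intro n hn
    have := hp n (mem_support_iff.mpr hn)
    rw [← this]
    simp [Fin.sum_univ_four, wt, Nat.cast_sub (show 1 ≤ b by lia)]
    field_simp
  have h1 := key m hm
  have h2 := key m' (by rwa [coeff_setU0 p m' h0])
  exact_mod_cast h1.trans h2.symm

lemma mon_zero (a b c e : ℕ) : mon a b c e 0 = a := by simp [mon]
lemma mon_one (a b c e : ℕ) : mon a b c e 1 = b := by simp [mon]
lemma mon_two (a b c e : ℕ) : mon a b c e 2 = c := by simp [mon]
lemma mon_three (a b c e : ℕ) : mon a b c e 3 = e := by simp [mon]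

lemma mon_eta (m : Fin 4 →₀ ℕ) : m = mon (m 0) (m 1) (m 2) (m 3) := by
  ext i
  fin_cases i <;> simp [mon]

lemma x_eq : x = monomial (mon 0 0 1 0) (1 : ℂ) := by simp [x, mon, X]
lemma v_eq : v = monomial (mon 0 1 0 0) (1 : ℂ) := by simp [v, mon, X]

lemma monomial_mon (i j k l : ℕ) (a : ℂ) :
    monomial (mon i j k l) a = C a * (u ^ i * v ^ j * x ^ k * y ^ l) := by
  simp only [u, v, x, y, X_pow_eq_monomial, monomial_mul, C_mul_monomial, mon, mul_one]

lemma coeff_mon_mon (i j k l i' j' k' l' : ℕ) (a : ℂ) :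
    coeff (mon i j k l) (monomial (mon i' j' k' l') a)
      = if i' = i ∧ j' = j ∧ k' = k ∧ l' = l then a else 0 := by
  rw [coeff_monomial]
  congr 1
  apply propext
  constructor
  · intro h
    refine ⟨?_, ?_, ?_, ?_⟩
    · simpa [mon] using DFunLike.congr_fun h 0
    · simpa [mon] using DFunLike.congr_fun h 1
    · simpa [mon] using DFunLike.congr_fun h 2
    · simpa [mon] using DFunLike.congr_fun h 3
  · rintro ⟨rfl, rfl, rfl, rfl⟩
    rfl

/-- The diagonal entries of degree `2`; the monomial `u y` has this degree only when `b = 2`. -/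
lemma form_x {b : ℕ} (hb : 2 ≤ b) {q : ℚ} {p : R4}
    (hp : WHom ![1 / (b : ℚ), 1, 2 / (b : ℚ), 1 - 1 / (b : ℚ)] q p)
    (h0 : setU0 p = x) :
    ∃ a c : ℂ, (c = 0 ∨ b = 2) ∧ p = x + C a * u ^ 2 + C c * (u * y) := by
  have hw : ∀ i j k l : ℕ, coeff (mon i j k l) p ≠ 0 →
      i + b * j + 2 * k + (b - 1) * l = 2 := by
    intro i j k l h
    have := wt_eq hb hp (mon 0 0 1 0) (by simp [mon]) (by rw [h0, x_eq]; simp) _ h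
    simpa [wt, mon_zero, mon_one, mon_two, mon_three] using this
  refine ⟨coeff (mon 2 0 0 0) p, coeff (mon 1 0 0 1) p, ?_, ?_⟩
  · by_cases h : coeff (mon 1 0 0 1) p = 0
    · exact Or.inl h
    · right
      have := hw _ _ _ _ h
      lia
  · have e1 : C (coeff (mon 2 0 0 0) p) * u ^ 2
        = monomial (mon 2 0 0 0) (coeff (mon 2 0 0 0) p) := by
      rw [monomial_mon]; ring
    have e2 : C (coeff (mon 1 0 0 1) p) * (u * y)
        = monomial (mon 1 0 0 1) (coeff (mon 1 0 0 1) p) := by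
      rw [monomial_mon]; ring
    rw [e1, e2, x_eq]
    ext m
    rw [mon_eta m]
    generalize m 0 = i
    generalize m 1 = j
    generalize m 2 = k
    generalize m 3 = l
    rw [coeff_add, coeff_add, coeff_mon_mon, coeff_mon_mon, coeff_mon_mon]
    rcases Nat.eq_zero_or_pos i with hi | hi
    · subst hi
      rw [coeff_setU0 p _ (mon_zero _ _ _ _), h0, x_eq, coeff_mon_mon]
      simp
    · by_cases hc : coeff (mon i j k l) p = 0
      · rw [hc]
        split_ifs with h1 h2 h3 h3 h2 h3 h3 <;> first | lia | skip
        · obtain ⟨rfl, rfl, rfl, rfl⟩ := h2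
          simp [hc]
        · obtain ⟨rfl, rfl, rfl, rfl⟩ := h3
          simp [hc]
        · simp
      · have := hw _ _ _ _ hc
        have hj : j = 0 := by
          by_contra hj
          have : b * 1 ≤ b * j := Nat.mul_le_mul_left b (by lia)
          lia
        subst hj
        have hk : k = 0 := by lia
        subst hk
        have hl : l = 0 ∨ l = 1 ∧ i = 1 := by
          by_contra hl
          have : 1 * l ≤ (b - 1) * l := Nat.mul_le_mul_right l (by lia)
          lia
        rcases hl with rfl | ⟨rfl, rfl⟩
        · have : i = 2 := by lia
          subst this
          simp
        · simp

/-- The off-diagonal entries: they have degree `b`, so besides `v` and `u y` only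
monomials in `u` and `x` occur, which collapse to a multiple of `u ^ b` under `x ↦ -a u² - c u y`. -/
lemma form_v {b : ℕ} (hb : 2 ≤ b) {q : ℚ} {p : R4}
    (hp : WHom ![1 / (b : ℚ), 1, 2 / (b : ℚ), 1 - 1 / (b : ℚ)] q p)
    (h0 : setU0 p = v) :
    ∃ r : ℂ,
      (∀ a c : ℂ, (c = 0 ∨ b = 2) → ∃ g : ℂ,
        subX (-(C a * u ^ 2 + C c * (u * y))) p = v + C r * (u * y) + C g * u ^ b) ∧
      pderiv 1 p = 1 ∧ (r = 0 → pderiv 3 p = 0) ∧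
      ∀ k l, coeff (mon (2 * b - 1) 0 k l) p = 0 := by
  have hw : ∀ i j k l : ℕ, coeff (mon i j k l) p ≠ 0 →
      i + b * j + 2 * k + (b - 1) * l = b := by
    intro i j k l h
    have := wt_eq hb hp (mon 0 1 0 0) (by simp [mon]) (by rw [h0, v_eq]; simp) _ h
    simpa [wt, mon_zero, mon_one, mon_two, mon_three] using this
  set r := coeff (mon 1 0 0 1) p with hr
  set G : R4 := p - v - C r * (u * y) with hG
  have e2 : C r * (u * y) = monomial (mon 1 0 0 1) r := by
    rw [monomial_mon]; ring
  have hGc : ∀ i j k l, coeff (mon i j k l) G ≠ 0 →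
      1 ≤ i ∧ j = 0 ∧ l = 0 ∧ i + 2 * k = b := by
    intro i j k l h
    rw [hG, coeff_sub, coeff_sub, e2, v_eq, coeff_mon_mon, coeff_mon_mon] at h
    rcases Nat.eq_zero_or_pos i with hi | hi
    · subst hi
      rw [coeff_setU0 p _ (mon_zero _ _ _ _), h0, v_eq, coeff_mon_mon] at h
      simp at h
    · by_cases h1 : 1 = i ∧ 0 = j ∧ 0 = k ∧ 1 = l
      · obtain ⟨rfl, rfl, rfl, rfl⟩ := h1
        simp [hr] at h
      · rw [if_neg (by lia), if_neg h1] at h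
        have := hw i j k l (by simpa using h)
        have hj : j = 0 := by
          by_contra hj
          have : b * 1 ≤ b * j := Nat.mul_le_mul_left b (by lia)
          lia
        subst hj
        have hl : l = 0 := by
          by_contra hl
          have h3 : (b - 1) * 1 ≤ (b - 1) * l := Nat.mul_le_mul_left (b - 1) (by lia)
          have h4 : l = 1 := by
            by_contra hl1
            have h3 : (b - 1) * 2 ≤ (b - 1) * l := Nat.mul_le_mul_left (b - 1) (by lia)
            lia
          subst h4
          lia
        subst hl
        exact ⟨hi, rfl, rfl, by lia⟩
  have hpG : p = v + C r * (u * y) + G := by rw [hG]; ring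
  have hpd : ∀ i : Fin 4, i = 1 ∨ i = 3 → pderiv i G = 0 := by
    intro i hi
    rw [← G.support_sum_monomial_coeff, map_sum]
    refine Finset.sum_eq_zero fun m hm => ?_
    rw [mem_support_iff, mon_eta m] at hm
    obtain ⟨-, h1, h3, -⟩ := hGc _ _ _ _ hm
    rw [pderiv_monomial]
    rcases hi with rfl | rfl <;> simp [h1, h3]
  refine ⟨r, ?_, ?_, ?_, ?_⟩
  · intro a c hc
    have hm : ∀ m ∈ G.support, ∃ g : ℂ,
        subX (-(C a * u ^ 2 + C c * (u * y))) (monomial m (coeff m G)) = C g * u ^ b := by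
      intro m hm
      rw [mem_support_iff] at hm
      obtain ⟨h1, h2, h3, h4⟩ := hGc _ _ _ _ (by rwa [mon_eta m] at hm)
      refine ⟨coeff m G * (-a) ^ m 2, ?_⟩
      rw [mon_eta m, h2, h3, monomial_mon]
      generalize coeff (mon (m 0) 0 (m 2) 0) G = t
      simp only [map_mul, map_pow, subX_C, subX_u, subX_v, subX_x, subX_y, mon_two]
      rcases hc with rfl | hb2
      · rw [← h4]
        simp only [map_neg, map_zero, zero_mul, add_zero, pow_zero, mul_one]
        ring
      · -- for `b = 2` the monomial is `u²`, since `u` divides it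
        have hk : m 2 = 0 := by lia
        have hi : m 0 = b := by lia
        rw [hk, hi]
        simp
    choose! g hg using hm
    refine ⟨∑ m ∈ G.support, g m, ?_⟩
    have hsum : subX (-(C a * u ^ 2 + C c * (u * y))) G
        = C (∑ m ∈ G.support, g m) * u ^ b := by
      conv_lhs => rw [← G.support_sum_monomial_coeff]
      rw [map_sum, map_sum, Finset.sum_mul]
      exact Finset.sum_congr rfl hg
    rw [hpG, map_add, map_add, hsum]
    simp only [map_mul, subX_C, subX_u, subX_v, subX_y]
  · rw [hpG, map_add, map_add, hpd 1 (Or.inl rfl)]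
    simp [v, u, y, pderiv_X]
  · intro h
    rw [hpG, map_add, map_add, hpd 3 (Or.inr rfl), h]
    simp [v, pderiv_X]
  · intro k l
    by_contra h
    have := hw _ _ _ _ h
    lia

/-- The constraints on the scalars in a factorisation, obtained by evaluating the determinant
identity on the locus where the first diagonal entry vanishes. -/
lemma scalars {b : ℕ} (hb : 2 ≤ b) {a c p g p' g' : ℂ} (hc : c = 0 ∨ b = 2)
    (h : ∀ U V Y : ℂ, (V + p * (U * Y) + g * U ^ b) * (V + p' * (U * Y) + g' * U ^ b)
      = U ^ (2 * b) + V ^ 2 - (-(a * U ^ 2 + c * (U * Y))) ^ b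
        - (-(a * U ^ 2 + c * (U * Y))) * Y ^ 2) :
    c = 0 ∧ p' = -p ∧ g' = -g ∧ a = -p ^ 2 ∧ p * g = 0 ∧ g ^ 2 = p ^ (2 * b) - 1 := by
  have hs : ∀ Y : ℂ, (p + p') * Y + (g + g') = 0 := by
    intro Y
    have h1 := h 1 1 Y
    have h0 := h 1 0 Y
    simp only [one_pow, one_mul, mul_one] at h1 h0
    linear_combination h1 - h0
  have hg : g' = -g := by linear_combination hs 0
  have hp : p' = -p := by linear_combination hs 1 - hs 0
  subst hg hp
  have hY : ∀ Y : ℂ, (p * Y + g) ^ 2 = (-(a + c * Y)) ^ b - 1 - (a + c * Y) * Y ^ 2 := by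
    intro Y
    have h0 := h 1 0 Y
    simp only [one_pow, one_mul, mul_one] at h0
    linear_combination -h0
  have hc0 : c = 0 := by
    rcases hc with h | rfl
    · exact h
    · linear_combination (1 / 6) * (hY 2 - 3 * hY 1 + 3 * hY 0 - hY (-1))
  subst hc0
  simp only [zero_mul, add_zero] at hY
  have ha : a = -p ^ 2 := by linear_combination (1 / 2) * (hY 1 + hY (-1) - 2 * hY 0)
  refine ⟨rfl, rfl, rfl, ha, ?_, ?_⟩
  · linear_combination (1 / 4) * (hY 1 - hY (-1))
  · have := hY 0
    rw [ha, neg_neg, ← pow_mul] at this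
    linear_combination this

theorem stmt9 (b : ℕ) (hb : 2 ≤ b) (d0 d1 : Matrix (Fin 2) (Fin 2) R4)
    (hmf1 : d1 * d0
      = (x ^ b + x * y ^ 2 - u ^ (2 * b) - v ^ 2) • (1 : Matrix (Fin 2) (Fin 2) R4))
    (hmf2 : d0 * d1
      = (x ^ b + x * y ^ 2 - u ^ (2 * b) - v ^ 2) • (1 : Matrix (Fin 2) (Fin 2) R4))
    (hgr : ∃ α β : Fin 2 → ℚ, ∀ i j,
        WHom ![1 / (b : ℚ), 1, 2 / (b : ℚ), 1 - 1 / (b : ℚ)] (1 + α j - β i) (d1 i j) ∧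
        WHom ![1 / (b : ℚ), 1, 2 / (b : ℚ), 1 - 1 / (b : ℚ)] (1 + β j - α i) (d0 i j))
    (hbd1 : d1.map setU0 = !![x, v; v, x ^ (b - 1) + y ^ 2])
    (hbd0 : d0.map setU0 = !![x ^ (b - 1) + y ^ 2, -v; -v, x])
    (hnd : ∃ c e : ℕ, coeff (mon (2 * b - 2) 0 c e)
        (str (pd 0 (Matrix.fromBlocks 0 d1 d0 0) * pd 1 (Matrix.fromBlocks 0 d1 d0 0)
          * pd 2 (Matrix.fromBlocks 0 d1 d0 0) * pd 3 (Matrix.fromBlocks 0 d1 d0 0))) ≠ 0) :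
    ∃ s : ℂ, s ^ (2 * b) = 1 ∧
      ∃ P Q : Matrix (Fin 2) (Fin 2) R4, IsUnit P ∧ IsUnit Q ∧
        P * d1 * Q = !![x - C s ^ 2 * u ^ 2, v + C s * u * y;
          v - C s * u * y,
          (∑ i ∈ Finset.range b, x ^ i * (C s * u) ^ (2 * (b - 1 - i))) + y ^ 2] := by
  obtain ⟨α, β, hgr⟩ := hgr
  have hE1 := fun i j => congrFun (congrFun hbd1 i) j
  have hE0 := fun i j => congrFun (congrFun hbd0 i) j
  have hM1 := fun i j => congrFun (congrFun hmf1 i) j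
  have hM2 := fun i j => congrFun (congrFun hmf2 i) j
  obtain ⟨a, c, hc, hδ⟩ := form_x hb (hgr 0 0).1 (by simpa using hE1 0 0)
  obtain ⟨a', c', -, hδ'⟩ := form_x hb (hgr 1 1).2 (by simpa using hE0 1 1)
  obtain ⟨p, hB, hBv, hBy, hBc⟩ := form_v hb (hgr 0 1).1 (by simpa using hE1 0 1)
  obtain ⟨p', hC, hCv, hCy, hCc⟩ := form_v hb (hgr 1 0).1 (by simpa using hE1 1 0)
  have m01 := hM1 0 1
  have m11 := hM1 1 1
  have n10 := hM2 1 0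
  have m00 := hM1 0 0
  simp [Matrix.mul_apply, Fin.sum_univ_two] at m01 m11 n10 m00
  clear hE1 hE0 hM1 hM2
  -- the two degree `2` diagonal entries agree
  have hδδ : d0 1 1 = d1 0 0 := by
    set φ := subX (-(C a' * u ^ 2 + C c' * (u * y))) with hφ
    have k0 : φ (d0 1 1) = 0 := by
      rw [hδ', map_add, map_add, hφ, subX_x]
      simp only [map_mul, map_pow, subX_C, subX_u, subX_y]
      ring
    have k1 := congrArg φ m01
    have k2 := congrArg φ m11
    rw [map_add, map_mul, map_mul, k0, mul_zero, add_zero, map_zero] at k1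
    rw [map_add, map_mul, map_mul, k0, mul_zero, add_zero] at k2
    have k3 : φ (d0 0 1) ≠ 0 := by
      intro h
      rw [h, mul_zero] at k2
      simp only [map_sub, map_add, map_mul, map_pow, hφ, subX_u, subX_v, subX_x, subX_y] at k2
      have := congrArg (eval ![0, 1, 0, 0]) k2
      simp [u, v, y, show b ≠ 0 by lia] at this
    have k4 := (mul_eq_zero.mp k1).resolve_right k3
    rw [hδ, map_add, map_add, hφ, subX_x] at k4
    simp only [map_mul, map_pow, subX_C, subX_u, subX_y] at k4
    rw [hδ, hδ']
    linear_combination -k4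
  have hδ0 : d1 0 0 ≠ 0 := by
    intro h
    rw [hδ] at h
    have := congrArg (eval ![0, 0, 1, 0]) h
    simp [u, x, y] at this
  have h01 : d0 0 1 = -d1 0 1 := by
    apply mul_left_cancel₀ hδ0
    rw [hδδ] at m01
    linear_combination m01
  have h10 : d0 1 0 = -d1 1 0 := by
    apply mul_left_cancel₀ hδ0
    rw [hδδ] at n10
    linear_combination n10
  have hdet : d1 0 0 * d1 1 1 - d1 0 1 * d1 1 0
      = x ^ b + x * y ^ 2 - u ^ (2 * b) - v ^ 2 := by
    rw [hδδ, h01] at m11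
    linear_combination m11
  have h00 : d0 0 0 = d1 1 1 := by
    apply mul_left_cancel₀ hδ0
    rw [h10] at m00
    linear_combination m00 - hdet
  obtain ⟨g, hBg⟩ := hB a c hc
  obtain ⟨g', hCg⟩ := hC a c hc
  have hsc := scalars hb (a := a) (p := p) (g := g) (p' := p') (g' := g') hc (by
    intro U V Y
    have k := congrArg (subX (-(C a * u ^ 2 + C c * (u * y)))) hdet
    have k0 : subX (-(C a * u ^ 2 + C c * (u * y))) (d1 0 0) = 0 := by
      rw [hδ, map_add, map_add, subX_x]
      simp only [map_mul, map_pow, subX_C, subX_u, subX_y]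
      ring
    rw [map_sub, map_mul, map_mul, k0, hBg, hCg] at k
    simp only [map_sub, map_add, map_mul, map_pow, subX_u, subX_v, subX_x, subX_y] at k
    have := congrArg (eval ![U, V, 0, Y]) k
    simp [u, v, y] at this
    linear_combination -this)
  obtain ⟨rfl, rfl, rfl, rfl, hpg, hg2⟩ := hsc
  have hδ2 : d1 0 0 = x - C p ^ 2 * u ^ 2 := by
    rw [hδ]
    simp only [map_neg, map_pow, map_zero]
    ring
  by_cases hp0 : p = 0
  · -- here the supertrace is `2y (∂ᵤ C - ∂ᵤ B)` for the off-diagonal entries `B`, `C` of `d1`,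
    -- whose degree in `u` is too small for the required coefficient
    exfalso
    obtain ⟨k, l, hnd⟩ := hnd
    apply hnd
    have hδx : d1 0 0 = x := by rw [hδ2, hp0]; simp
    have hEy : pderiv 3 (d1 1 1) = 2 * y := by
      have k := congrArg (pderiv 3) hdet
      rw [hδx] at k
      have hx0 : x ≠ 0 := hδx ▸ hδ0
      apply mul_left_cancel₀ hx0
      simp [hBy hp0, hCy (by rw [hp0, neg_zero]), x, y, u, v, pderiv_X] at k ⊢
      linear_combination k
    have hstr : str (pd 0 (Matrix.fromBlocks 0 d1 d0 0) * pd 1 (Matrix.fromBlocks 0 d1 d0 0)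
          * pd 2 (Matrix.fromBlocks 0 d1 d0 0) * pd 3 (Matrix.fromBlocks 0 d1 d0 0))
        = C 2 * (pderiv 0 (d1 1 0 - d1 0 1) * X 3) := by
      have e0 : d0 = !![d1 1 1, -d1 0 1; -d1 1 0, d1 0 0] := by
        rw [Matrix.eta_fin_two d0, h00, h01, h10, hδδ]
      have hpd : ∀ i : Fin 4, pd i (Matrix.fromBlocks 0 d1 d0 0)
          = Matrix.fromBlocks 0 (pd i d1) (pd i d0) 0 := by
        intro i
        simp [pd, Matrix.fromBlocks_map]
      simp only [hpd, Matrix.fromBlocks_multiply, str, Matrix.toBlocks_fromBlocks₁₁,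
        Matrix.toBlocks_fromBlocks₂₂]
      rw [e0]
      simp [Matrix.trace_fin_two, Matrix.mul_apply, Fin.sum_univ_two, pd, hBy hp0,
        hCy (by rw [hp0, neg_zero]), hEy, hBv, hCv]
      simp [hδx, x, y, pderiv_X]
      rw [show (C 2 : R4) = 2 from map_ofNat C 2]
      ring
    rw [hstr, coeff_C_mul, coeff_mul_X']
    split_ifs with h
    · have : mon (2 * b - 2) 0 k l - Finsupp.single 3 1 = mon (2 * b - 2) 0 k (l - 1) := by
        ext i
        fin_cases i <;> simp [mon]
      rw [this, coeff_pderiv]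
      have : mon (2 * b - 2) 0 k (l - 1) + Finsupp.single 0 1 = mon (2 * b - 1) 0 k (l - 1) := by
        ext i
        fin_cases i <;> simp [mon]
        lia
      rw [this, coeff_sub, hBc, hCc]
      simp
    · simp
  · have hg0 : g = 0 := (mul_eq_zero.mp hpg).resolve_left hp0
    subst hg0
    have hs : p ^ (2 * b) = 1 := by linear_combination -hg2
    refine ⟨p, hs, ?_⟩
    obtain ⟨h, hh⟩ := sub_subX_dvd (-(C (-p ^ 2) * u ^ 2 + C 0 * (u * y))) (d1 0 1)
    obtain ⟨k, hk⟩ := sub_subX_dvd (-(C (-p ^ 2) * u ^ 2 + C 0 * (u * y))) (d1 1 0)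
    rw [hBg] at hh
    rw [hCg] at hk
    simp only [map_neg, map_pow, map_zero] at hh hk
    have hB' : d1 0 1 = v + C p * u * y + d1 0 0 * h := by rw [hδ2]; linear_combination hh
    have hC' : d1 1 0 = v - C p * u * y + d1 0 0 * k := by rw [hδ2]; linear_combination hk
    have hgeom : d1 0 0 * ∑ i ∈ Finset.range b, x ^ i * (C p * u) ^ (2 * (b - 1 - i))
        = x ^ b - u ^ (2 * b) := by
      have := geom_sum₂_mul x ((C p * u) ^ 2) b
      simp only [← pow_mul] at this
      have hCs : (C p : R4) ^ (2 * b) = 1 := by rw [← map_pow, hs, map_one]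
      rw [mul_pow _ _ (2 * b), hCs] at this
      rw [hδ2]
      linear_combination this
    refine ⟨!![1, 0; -k, 1], !![1, -h; 0, 1], ?_, ?_, ?_⟩
    · rw [Matrix.isUnit_iff_isUnit_det]; simp
    · rw [Matrix.isUnit_iff_isUnit_det]; simp
    · have hE : d1 1 1 - k * d1 0 1 - h * d1 1 0 + h * k * d1 0 0
          = (∑ i ∈ Finset.range b, x ^ i * (C p * u) ^ (2 * (b - 1 - i))) + y ^ 2 := by
        apply mul_left_cancel₀ hδ0
        have hδ3 : d1 0 0 * y ^ 2 = (x - C p ^ 2 * u ^ 2) * y ^ 2 := by rw [hδ2]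
        rw [hB', hC'] at hdet ⊢
        linear_combination hdet - hδ3 - hgeom
      rw [← hE]
      rw [Matrix.eta_fin_two d1]
      ext1 i j
      fin_cases i <;> fin_cases j <;> simp [Matrix.mul_apply, Fin.sum_univ_two]
      · rw [hδ2]
      · rw [hB']; ring
      · rw [hC']; ring
      · ring
end
end

section
/- Let s, t ∈ ℂ satisfy t² = 1/3 and s^{12} = −576(26t − 15), and let d¹ be the 2×2 matrix over R = ℂ[u,v,x,y] with entries a = y² − v + (1/2)·x·(s·u)² + ((2t+1)/8)·(s·u)⁶, b = −x + y·(s·u) + ((t+1)/4)·(s·u)⁴, c = x² + y·x·(s·u) + (t/4)·x·(s·u)⁴ + ((2t+1)/4)·y·(s·u)⁵ − ((9t+5)/48)·(s·u)⁸, d = y² + v + (1/2)·x·(s·u)² + ((2t+1)/8)·(s·u)⁶; set d⁰ = adjugate(d¹) and let d = [[0, d¹], [d⁰, 0]] be the 4×4 twisted differential of the resulting matrix factorisation of x³ + y⁴ − u^{12} − v². Let 𝔈 be the ℂ-vector space of 4×4 matrices F over R of block-diagonal form F = [[f⁰, 0], [0, f¹]] (with 2×2 blocks) satisfying d·F = F·d,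 and let 𝔑 ⊆ 𝔈 be the subspace of all matrices of the form d·H + H·d, where H ranges over 4×4 matrices over R of block off-diagonal form [[0, h¹], [h⁰, 0]]. Then the quotient ℂ-vector space 𝔈/𝔑 (the space of even endomorphisms of the matrix factorisation up to homotopy) has dimension 16. -/
/-!
Write `d¹ = !![p - v, b; c, p + v]` with `p, b, c` free of `v`. The map sending an even
endomorphism `F` to the class of its upper left entry in `R/J`, where `J = (v, p, b, c)` is the
ideal of the entries of `d¹`, induces an isomorphism `𝔈/𝔑 ≅ R/J`.

It is onto because scalar matrices are endomorphisms, and it kills `𝔑` because every entry of `d¹`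
and of its adjugate lies in `J`. For injectivity, `exists_scalar_mod_null` shows that every even
endomorphism is homotopic to a scalar `e`: since `d¹` is linear in `v` with constant invertible
leading coefficient, one may divide by it and assume the endomorphism free of `v`, and then it
commutes (up to the sign matrix `diag(-1, 1)`) with `!![p, b; c, p]`, which leaves little room
because `b, p` is a regular sequence. If `e ∈ J`, then `e = tr(d¹·h⁰)` for some `h⁰`, and this
scalar is null-homotopic through `(h⁰, adj h⁰)` (`scalar_null`).

It remains to see that `dim R/J = 16`. Put `w = s·u` and `y₀ = y - (t + 1/2)·w³`. The relations
`v = b = 0` eliminate `v` and `x`; then `p = 0` becomes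
`y₀² + (2t + 3/2)·w³·y₀ + (13/12 + 15t/8)·w⁶ = 0` and `c = 0` becomes `w⁵·y₀ = 0`. Together they
imply `w¹¹ = 0`, and the free `ℂ[w]`-module `ℂ[w] ⊕ ℂ[w]·y₀` modulo the ideal of `w⁵·y₀` is
`ℂ[w]/(w¹¹) ⊕ ℂ[w]/(w⁵)·y₀`, of dimension `11 + 5`. The hypothesis on `s` enters only through
`s ≠ 0`.
-/

open MvPolynomial

noncomputable section

/-- The matrix `d¹` of the E₆ orbifold equivalence. -/
def dE6 (s t : ℂ) : Matrix (Fin 2) (Fin 2) R4 :=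
  !![y ^ 2 - v + C (1/2 : ℂ) * x * (C s * u) ^ 2 + C ((2*t+1)/8) * (C s * u) ^ 6,
     -x + y * (C s * u) + C ((t+1)/4) * (C s * u) ^ 4;
     x ^ 2 + y * x * (C s * u) + C (t/4) * x * (C s * u) ^ 4
       + C ((2*t+1)/4) * y * (C s * u) ^ 5 - C ((9*t+5)/48) * (C s * u) ^ 8,
     y ^ 2 + v + C (1/2 : ℂ) * x * (C s * u) ^ 2 + C ((2*t+1)/8) * (C s * u) ^ 6]

/-- The twisted differential `d = [[0, d¹], [d⁰, 0]]` with `d⁰` the adjugate of `d¹`. -/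
def DE6 (s t : ℂ) : Matrix (Fin 2 ⊕ Fin 2) (Fin 2 ⊕ Fin 2) R4 :=
  Matrix.fromBlocks 0 (dE6 s t) (dE6 s t).adjugate 0

section Blocks

variable {F G : Matrix (Fin 2 ⊕ Fin 2) (Fin 2 ⊕ Fin 2) R4} {c : ℂ}

lemma tb11_add : (F + G).toBlocks₁₁ = F.toBlocks₁₁ + G.toBlocks₁₁ := rfl
lemma tb12_add : (F + G).toBlocks₁₂ = F.toBlocks₁₂ + G.toBlocks₁₂ := rfl
lemma tb21_add : (F + G).toBlocks₂₁ = F.toBlocks₂₁ + G.toBlocks₂₁ := rfl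
lemma tb22_add : (F + G).toBlocks₂₂ = F.toBlocks₂₂ + G.toBlocks₂₂ := rfl
lemma tb11_smul : (c • F).toBlocks₁₁ = c • F.toBlocks₁₁ := rfl
lemma tb12_smul : (c • F).toBlocks₁₂ = c • F.toBlocks₁₂ := rfl
lemma tb21_smul : (c • F).toBlocks₂₁ = c • F.toBlocks₂₁ := rfl
lemma tb22_smul : (c • F).toBlocks₂₂ = c • F.toBlocks₂₂ := rfl

end Blocks

/-- The ℂ-vector space `𝔈` of even (block-diagonal) endomorphisms commuting with `D`. -/
def EvenEnd (D : Matrix (Fin 2 ⊕ Fin 2) (Fin 2 ⊕ Fin 2) R4) :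
    Submodule ℂ (Matrix (Fin 2 ⊕ Fin 2) (Fin 2 ⊕ Fin 2) R4) where
  carrier := {F | F.toBlocks₁₂ = 0 ∧ F.toBlocks₂₁ = 0 ∧ D * F = F * D}
  zero_mem' := ⟨rfl, rfl, by simp⟩
  add_mem' := by
    rintro F G ⟨hF1, hF2, hF3⟩ ⟨hG1, hG2, hG3⟩
    exact ⟨by rw [tb12_add, hF1, hG1, add_zero],
           by rw [tb21_add, hF2, hG2, add_zero],
           by rw [Matrix.mul_add, hF3, hG3, Matrix.add_mul]⟩
  smul_mem' := by
    rintro c F ⟨h1, h2, h3⟩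
    exact ⟨by rw [tb12_smul, h1, smul_zero],
           by rw [tb21_smul, h2, smul_zero],
           by rw [Matrix.mul_smul, h3, Matrix.smul_mul]⟩

/-- The subspace `𝔑` of null-homotopic even endomorphisms `D·H + H·D`
with `H` block off-diagonal. -/
def NullHtpy (D : Matrix (Fin 2 ⊕ Fin 2) (Fin 2 ⊕ Fin 2) R4) :
    Submodule ℂ (Matrix (Fin 2 ⊕ Fin 2) (Fin 2 ⊕ Fin 2) R4) where
  carrier := {F | ∃ H, H.toBlocks₁₁ = 0 ∧ H.toBlocks₂₂ = 0 ∧ F = D * H + H * D}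
  zero_mem' := ⟨0, rfl, rfl, by simp⟩
  add_mem' := by
    rintro F G ⟨H, h1, h2, h3⟩ ⟨K, k1, k2, k3⟩
    exact ⟨H + K, by rw [tb11_add, h1, k1, add_zero],
           by rw [tb22_add, h2, k2, add_zero],
           by rw [h3, k3, Matrix.mul_add, Matrix.add_mul]; abel⟩
  smul_mem' := by
    rintro c F ⟨H, h1, h2, h3⟩
    exact ⟨c • H, by rw [tb11_smul, h1, smul_zero],
           by rw [tb22_smul, h2, smul_zero],
           by rw [h3, smul_add, Matrix.mul_smul, Matrix.smul_mul]⟩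

/-! ### The entries of `d¹` -/

/-- `w = s·u`. -/
def wE (s : ℂ) : R4 := C s * u

/-- The `v`-free part of the diagonal entries of `d¹`. -/
def pE (s t : ℂ) : R4 :=
  y ^ 2 + C (1/2 : ℂ) * x * (C s * u) ^ 2 + C ((2*t+1)/8) * (C s * u) ^ 6

/-- The upper right entry of `d¹`. -/
def bE (s t : ℂ) : R4 := -x + y * (C s * u) + C ((t+1)/4) * (C s * u) ^ 4

/-- The lower left entry of `d¹`. -/
def cE (s t : ℂ) : R4 :=
  x ^ 2 + y * x * (C s * u) + C (t/4) * x * (C s * u) ^ 4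
       + C ((2*t+1)/4) * y * (C s * u) ^ 5 - C ((9*t+5)/48) * (C s * u) ^ 8

/-- The shifted variable `y₀ = y - (t + 1/2)·w³`, annihilated by `w⁵` modulo the entries of `d¹`. -/
def y0E (s t : ℂ) : R4 := y - C (t + 1/2) * wE s ^ 3

lemma dE6_eq (s t : ℂ) : dE6 s t = !![pE s t - v, bE s t; cE s t, pE s t + v] := by
  ext i j
  fin_cases i <;> fin_cases j <;> simp [dE6, pE, bE, cE] <;> ring

/-- The ideal generated by the entries of `d¹`. -/
def JE (s t : ℂ) : Ideal R4 := Ideal.span {v, pE s t, bE s t, cE s t}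

/-- Modulo `b`, the entry `p` becomes a monic quadratic in `y₀` over `ℂ[w]`. -/
lemma ident1 (s t : ℂ) (ht : t ^ 2 = 1/3) :
    pE s t + C (1/2) * wE s ^ 2 * bE s t =
      y0E s t ^ 2 + C (2*t+3/2) * wE s ^ 3 * y0E s t + C (13/12 + 15/8*t) * wE s ^ 6 := by
  apply MvPolynomial.funext
  intro z
  simp only [pE, bE, y0E, wE, u, x, y, map_add, map_mul, map_sub, map_pow, eval_C, eval_X, map_neg]
  linear_combination (s * z 0) ^ 6 * ht

/-- Modulo `p` and `b`, the entry `c` becomes a nonzero multiple of `w⁵·y₀`. -/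
lemma ident2 (s t : ℂ) (ht : t ^ 2 = 1/3) :
    cE s t = C (3*t/2) * wE s ^ 5 * y0E s t + 2 * wE s ^ 2 * (pE s t + C (1/2) * wE s ^ 2 * bE s t)
      - bE s t * (x + (y * wE s + C ((t+1)/4) * wE s ^ 4) + y * wE s + C (t/4) * wE s ^ 4) := by
  apply MvPolynomial.funext
  intro z
  simp only [pE, bE, cE, y0E, wE, u, x, y, map_add, map_mul, map_sub, map_pow, eval_C, eval_X,
    map_neg, map_ofNat]
  linear_combination (13/8) * (s * z 0) ^ 8 * ht

/-! ### Division by `d¹` with respect to `v` -/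

section Division

/-- The substitution `v ↦ 0`. -/
def killV : R4 →ₐ[ℂ] R4 := aeval ![u, 0, x, y]

/-- `R → R[Z]` replacing `v` by the new variable `Z`. -/
def liftV : R4 →ₐ[ℂ] Polynomial R4 :=
  aeval ![Polynomial.C u, Polynomial.X, Polynomial.C x, Polynomial.C y]

@[simp] lemma killV_u : killV u = u := by simp [killV, u]
@[simp] lemma killV_v : killV v = 0 := by simp [killV, v]
@[simp] lemma killV_x : killV x = x := by simp [killV, x]
@[simp] lemma killV_y : killV y = y := by simp [killV, y]
@[simp] lemma killV_C (z : ℂ) : killV (C z) = C z := by simp [killV, algebraMap_eq]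

lemma killV_p (s t : ℂ) : killV (pE s t) = pE s t := by simp [pE]
lemma killV_b (s t : ℂ) : killV (bE s t) = bE s t := by simp [bE]
lemma killV_c (s t : ℂ) : killV (cE s t) = cE s t := by simp [cE]

/-- A polynomial fixed by `killV` is free of `v`, so `liftV` sends it to a constant. -/
lemma liftV_of_fixed {k : R4} (hk : killV k = k) : liftV k = Polynomial.C k := by
  have h : liftV.comp killV = (Polynomial.CAlgHom (R := ℂ)).comp killV := by
    apply MvPolynomial.algHom_ext
    intro i
    fin_cases i <;> simp [killV, liftV, u, x, y]
  have := DFunLike.congr_fun h k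
  simpa [hk] using this

lemma liftV_v : liftV v = Polynomial.X := by simp [liftV, v]

lemma eval_liftV (q : R4) : (liftV q).eval v = q := by
  have h : ((Polynomial.aeval v : Polynomial R4 →ₐ[R4] R4).restrictScalars ℂ).comp liftV
      = AlgHom.id ℂ R4 := by
    apply MvPolynomial.algHom_ext
    intro i
    fin_cases i <;> simp [liftV, u, v, x, y]
  have := DFunLike.congr_fun h q
  simpa [Polynomial.coe_aeval_eq_eval] using this

/-- A multiple of a polynomial monic of degree two in `v` cannot have degree at most one in `v`
unless it vanishes. -/
lemma eq_zero_of_quadratic_mul {g k l n : R4} (hg : killV g = g) (hk : killV k = k)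
    (hl : killV l = l) (h : (v ^ 2 - g) * n = v * k + l) : n = 0 := by
  have h1 := congrArg liftV h
  simp only [map_mul, map_sub, map_add, map_pow, liftV_v, liftV_of_fixed hg, liftV_of_fixed hk,
    liftV_of_fixed hl] at h1
  have hn : liftV n = 0 := by
    by_contra hne
    have hm : (Polynomial.X ^ 2 - Polynomial.C g).Monic := by
      apply Polynomial.monic_X_pow_sub_C; norm_num
    have hd := hm.natDegree_mul' hne
    rw [h1, Polynomial.natDegree_X_pow_sub_C] at hd
    have : (Polynomial.X * Polynomial.C k + Polynomial.C l : Polynomial R4).natDegree ≤ 1 := by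
      compute_degree
    omega
  have := eval_liftV n
  rw [hn] at this
  simpa using this.symm

/-- Division with remainder by `d¹`, which is linear in `v` with invertible leading coefficient. -/
lemma exists_div_scalar {p b c : R4} (hp : killV p = p) (hb : killV b = b) (hc : killV c = c)
    (q : R4) : ∃ h B : Matrix (Fin 2) (Fin 2) R4, B.map killV = B ∧
      q • (1 : Matrix (Fin 2) (Fin 2) R4) = !![p - v, b; c, p + v] * h + B := by
  induction q using MvPolynomial.induction_on with
  | C z =>
    refine ⟨0, C z • 1, ?_, by rw [Matrix.mul_zero, zero_add]⟩
    ext1 i j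
    fin_cases i <;> fin_cases j <;> simp
  | add q r hq hr =>
    obtain ⟨h, B, hB, e⟩ := hq
    obtain ⟨h', B', hB', e'⟩ := hr
    refine ⟨h + h', B + B', ?_, ?_⟩
    · rw [Matrix.map_add _ (map_add _), hB, hB']
    · rw [add_smul, e, e', Matrix.mul_add]; abel
  | mul_X q i hq =>
    obtain ⟨h, B, hB, e⟩ := hq
    have hB' : ∀ i j, killV (B i j) = B i j := fun i j => congrFun (congrFun hB i) j
    have hfix : ∀ i : Fin 4, killV (X i) = X i → ∃ h B : Matrix (Fin 2) (Fin 2) R4,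
        B.map killV = B ∧
        (q * X i) • (1 : Matrix (Fin 2) (Fin 2) R4) = !![p - v, b; c, p + v] * h + B := by
      intro i hi
      refine ⟨(X i : R4) • h, (X i : R4) • B, ?_, ?_⟩
      · ext1 k l; simp [hB', hi]
      · rw [mul_comm, mul_smul, e, smul_add, Matrix.mul_smul]
    fin_cases i
    · exact hfix 0 killV_u
    · -- `d¹·diag(-1, 1) = v - !![p, -b; c, -p]`
      refine ⟨v • h + !![-1, 0; 0, 1] * B, !![p, -b; c, -p] * B, ?_, ?_⟩
      · ext1 k l
        fin_cases k <;> fin_cases l <;>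
          simp [-Matrix.cons_mul, Matrix.mul_apply, Fin.sum_univ_two, hB', hp, hb, hc]
      · have : (q * X 1 : R4) • (1 : Matrix (Fin 2) (Fin 2) R4) = v • (q • 1) := by
          rw [mul_comm, mul_smul]; rfl
        refine this.trans ?_
        rw [e]
        ext1 k l
        fin_cases k <;> fin_cases l <;>
          simp [-Matrix.cons_mul, Matrix.mul_apply, Fin.sum_univ_two] <;> ring
    · exact hfix 2 killV_x
    · exact hfix 3 killV_y

lemma exists_div {p b c : R4} (hp : killV p = p) (hb : killV b = b) (hc : killV c = c)
    (M : Matrix (Fin 2) (Fin 2) R4) : ∃ h B : Matrix (Fin 2) (Fin 2) R4, B.map killV = B ∧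
      M = !![p - v, b; c, p + v] * h + B := by
  have key := fun i j => exists_div_scalar hp hb hc (M i j)
  choose h B hB e using key
  refine ⟨∑ i, ∑ j, h i j * Matrix.single i j 1, ∑ i, ∑ j, B i j * Matrix.single i j 1, ?_, ?_⟩
  · have hB' : ∀ i j k l, killV (B i j k l) = B i j k l :=
      fun i j k l => congrFun (congrFun (hB i j) k) l
    ext1 k l
    fin_cases k <;> fin_cases l <;>
      simp [Matrix.mul_apply, Fin.sum_univ_two, Matrix.single_apply, Matrix.add_apply, hB']
  · calc M = ∑ i, ∑ j, (M i j • (1 : Matrix (Fin 2) (Fin 2) R4)) * Matrix.single i j 1 := by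
          ext1 k l
          fin_cases k <;> fin_cases l <;>
            simp [Fin.sum_univ_two, Matrix.add_apply]
      _ = _ := by
          simp only [e, Matrix.add_mul, Finset.sum_add_distrib, Matrix.mul_sum, Matrix.mul_assoc]

end Division

/-! ### Divisibility by `b` -/

section Bdvd

/-- The substitution `x ↦ y·w + ((t+1)/4)·w⁴`, whose kernel is generated by `b`. -/
def substX (s t : ℂ) : R4 →ₐ[ℂ] R4 :=
  aeval ![u, v, y * (C s * u) + C ((t+1)/4) * (C s * u) ^ 4, y]

lemma bE_dvd_sub (s t : ℂ) (q : R4) : bE s t ∣ q - substX s t q := by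
  rw [← Ideal.mem_span_singleton, ← Ideal.Quotient.mk_eq_mk_iff_sub_mem]
  have h : (Ideal.Quotient.mkₐ ℂ (Ideal.span {bE s t})) =
      (Ideal.Quotient.mkₐ ℂ (Ideal.span {bE s t})).comp (substX s t) := by
    apply MvPolynomial.algHom_ext
    intro i
    fin_cases i
    · simp [substX, u]
    · simp [substX, v]
    · simp only [Ideal.Quotient.mkₐ_eq_mk, AlgHom.comp_apply]
      rw [Ideal.Quotient.mk_eq_mk_iff_sub_mem, Ideal.mem_span_singleton]
      refine ⟨-1, ?_⟩
      simp [substX, bE, x]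
      ring
    · simp [substX, y]
  exact DFunLike.congr_fun h q

lemma substX_b (s t : ℂ) : substX s t (bE s t) = 0 := by
  simp [bE, substX, u, x, y, algebraMap_eq]

/-- `b, p` is a regular sequence: `R/(b)` is a domain in which `p` does not vanish. -/
lemma bE_dvd_of_dvd_mul (s t : ℂ) (q : R4) (h : bE s t ∣ pE s t * q) : bE s t ∣ q := by
  have hb := bE_dvd_sub s t q
  have hp : substX s t (pE s t) ≠ 0 := by
    intro h0
    have := congrArg (eval ![0, 0, 0, 1]) h0
    simp [pE, substX, u, x, y, algebraMap_eq] at this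
  obtain ⟨r, hr⟩ := h
  have h2 := congrArg (substX s t) hr
  rw [map_mul, map_mul, substX_b, zero_mul] at h2
  rw [(mul_eq_zero.mp h2).resolve_left hp, sub_zero] at hb
  exact hb

lemma bE_ne_zero (s t : ℂ) : bE s t ≠ 0 := by
  intro h0
  have := congrArg (eval ![0, 0, 1, 0]) h0
  simp [bE, u, x, y] at this

end Bdvd

/-! ### Even endomorphisms up to homotopy -/

/-- Every even endomorphism is homotopic to a scalar. After division by `d¹` the block `f⁰` is a
`v`-free matrix `B`; comparing `v`-degrees forces `f¹ = σBσ` with `σ = diag(-1, 1)` and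
`B·P = P·(σBσ)` for `P = !![p, b; c, p]`. As `b, p` is a regular sequence, `B` is then a scalar
plus a multiple `k` of `!![-p, b; -c, p]`, and the latter is null-homotopic through
`h⁰ = h¹ = (k/2)·σ`. -/
lemma exists_scalar_mod_null (s t : ℂ) (f0 f1 : Matrix (Fin 2) (Fin 2) R4)
    (hf : dE6 s t * f1 = f0 * dE6 s t) :
    ∃ (h0 h1 : Matrix (Fin 2) (Fin 2) R4) (e : R4),
      f0 = dE6 s t * h0 + h1 * (dE6 s t).adjugate + e • 1 ∧
      f1 = (dE6 s t).adjugate * h1 + h0 * dE6 s t + e • 1 := by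
  obtain ⟨h, B, hB, e⟩ := exists_div (killV_p s t) (killV_b s t) (killV_c s t) f0
  have hB' : ∀ i j, killV (B i j) = B i j := fun i j => congrFun (congrFun hB i) j
  have hp := killV_p s t
  have hb := killV_b s t
  have hc := killV_c s t
  have hdvd := bE_dvd_of_dvd_mul s t
  have hb0 := bE_ne_zero s t
  rw [dE6_eq] at hf ⊢
  generalize pE s t = p at *
  generalize bE s t = b at *
  generalize cE s t = c at *
  subst e
  set A : Matrix (Fin 2) (Fin 2) R4 := !![p - v, b; c, p + v] with hA
  -- `G = 0` expresses `f¹ = hA + σBσ`; `A * G = K` with `K` free of `v`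
  set G := f1 - h * A - !![B 0 0, -B 0 1; -B 1 0, B 1 1] with hG
  set K : Matrix (Fin 2) (Fin 2) R4 :=
    !![B 0 1 * c + b * B 1 0, B 0 0 * b + 2 * p * B 0 1 - b * B 1 1;
       2 * p * B 1 0 + B 1 1 * c - c * B 0 0, B 1 0 * b + c * B 0 1] with hK
  have hAG : A * G = K := by
    have : A * G = B * A - A * !![B 0 0, -B 0 1; -B 1 0, B 1 1] := by
      rw [hG, Matrix.mul_sub, Matrix.mul_sub, hf]; noncomm_ring
    rw [this, hA, hK]
    ext1 k l
    fin_cases k <;> fin_cases l <;> simp [Matrix.mul_apply, Fin.sum_univ_two] <;> ring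
  have hKf : ∀ i j, killV (K i j) = K i j := by
    intro i j
    fin_cases i <;> fin_cases j <;> simp [hK, hB', hp, hb, hc, map_ofNat killV 2]
  have e00 := congrFun (congrFun hAG 0) 0
  have e01 := congrFun (congrFun hAG 0) 1
  have e10 := congrFun (congrFun hAG 1) 0
  have e11 := congrFun (congrFun hAG 1) 1
  have hG0 : G = 0 := by
    clear_value G K
    have hg : killV (p ^ 2 - b * c) = p ^ 2 - b * c := by simp [hp, hb, hc]
    simp only [hA, Matrix.mul_apply, Fin.sum_univ_two, Matrix.of_apply, Matrix.cons_val_zero,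
      Matrix.cons_val_one, Matrix.cons_val', Matrix.cons_val_fin_one] at e00 e01 e10 e11
    -- multiply `A * G = K` by the adjugate of `A`
    ext1 k l
    fin_cases k <;> fin_cases l
    · refine eq_zero_of_quadratic_mul (k := -K 0 0) (l := -(p * K 0 0) + b * K 1 0) hg
        (by simp [hKf]) (by simp [hKf, hp, hb]) ?_
      simp only [Fin.zero_eta]
      linear_combination (-(p + v)) * e00 + b * e10
    · refine eq_zero_of_quadratic_mul (k := -K 0 1) (l := -(p * K 0 1) + b * K 1 1) hg
        (by simp [hKf]) (by simp [hKf, hp, hb]) ?_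
      simp only [Fin.zero_eta, Fin.mk_one]
      linear_combination (-(p + v)) * e01 + b * e11
    · refine eq_zero_of_quadratic_mul (k := K 1 0) (l := -(p * K 1 0) + c * K 0 0) hg
        (by simp [hKf]) (by simp [hKf, hp, hc]) ?_
      simp only [Fin.zero_eta, Fin.mk_one]
      linear_combination (-(p - v)) * e10 + c * e00
    · refine eq_zero_of_quadratic_mul (k := K 1 1) (l := -(p * K 1 1) + c * K 0 1) hg
        (by simp [hKf]) (by simp [hKf, hp, hc]) ?_
      simp only [Fin.mk_one]
      linear_combination (-(p - v)) * e11 + c * e01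
  rw [hG0, Matrix.mul_zero] at hAG
  have k00 : 0 = B 0 1 * c + b * B 1 0 := congrFun (congrFun hAG 0) 0
  have k01 : 0 = B 0 0 * b + 2 * p * B 0 1 - b * B 1 1 := congrFun (congrFun hAG 0) 1
  obtain ⟨η, half⟩ : ∃ η : R4, η * 2 = 1 := ⟨C (1/2), by
    rw [show (2 : R4) = C 2 from (map_ofNat C 2).symm, ← C_mul]; norm_num⟩
  obtain ⟨k, hk⟩ : b ∣ B 0 1 := hdvd _ ⟨η * (B 1 1 - B 0 0), by
    linear_combination (-η) * k01 - (p * B 0 1) * half⟩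
  have hd : B 1 1 = B 0 0 + 2 * p * k := by
    apply mul_left_cancel₀ hb0
    linear_combination k01 + 2 * p * hk
  have hc' : B 1 0 = - c * k := by
    apply mul_left_cancel₀ hb0
    linear_combination -k00 - c * hk
  have hf1 : f1 = h * A + !![B 0 0, -B 0 1; -B 1 0, B 1 1] := by
    rw [hG, sub_sub, sub_eq_zero] at hG0; exact hG0
  set S : Matrix (Fin 2) (Fin 2) R4 := !![-(η * k), 0; 0, η * k] with hS
  refine ⟨h + S, S, B 0 0 + p * k, ?_, ?_⟩
  · have : B = A * S + S * A.adjugate + (B 0 0 + p * k) • 1 := by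
      ext1 i j
      fin_cases i <;> fin_cases j <;>
        simp [hA, hS, Matrix.adjugate_fin_two, hk, hd, hc']
      · linear_combination p * k * half
      · linear_combination (-b * k) * half
      · linear_combination (c * k) * half
      · linear_combination (-p * k) * half
    rw [Matrix.mul_add]
    nth_rewrite 1 [this]
    abel
  · have : !![B 0 0, -B 0 1; -B 1 0, B 1 1] = A.adjugate * S + S * A + (B 0 0 + p * k) • 1 := by
      ext1 i j
      fin_cases i <;> fin_cases j <;>
        simp [hA, hS, Matrix.adjugate_fin_two, hk, hd, hc']
      · linear_combination p * k * half
      · linear_combination (b * k) * half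
      · linear_combination (-c * k) * half
      · linear_combination (-p * k) * half
    rw [hf1, this, Matrix.add_mul]
    abel

/-! ### The quotient of `R` by the entries of `d¹` -/

section Jacobian

/-- `ℂ[w][ω]` with `ω² = -(13/12 + 15t/8)·w⁶ - (2t + 3/2)·w³·ω`. -/
abbrev QE (t : ℂ) : Type :=
  QuadraticAlgebra (Polynomial ℂ) (-(Polynomial.C (13/12 + 15/8*t) * Polynomial.X ^ 6))
    (-(Polynomial.C (2*t+3/2) * Polynomial.X ^ 3))

/-- The variable `w` in `QE t`. -/
def WQ (t : ℂ) : QE t := ⟨Polynomial.X, 0⟩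

/-- The generator `ω` of `QE t`. -/
def OQ (t : ℂ) : QE t := ⟨0, 1⟩

lemma algebraMap_QE (t z : ℂ) : algebraMap ℂ (QE t) z = ⟨Polynomial.C z, 0⟩ := rfl

lemma WQ_pow (t : ℂ) (n : ℕ) : WQ t ^ n = ⟨Polynomial.X ^ n, 0⟩ :=
  (QuadraticAlgebra.C_pow n (Polynomial.X : Polynomial ℂ)).symm

lemma OQ_sq (t : ℂ) : OQ t ^ 2 + algebraMap ℂ (QE t) (2*t+3/2) * WQ t ^ 3 * OQ t
    + algebraMap ℂ (QE t) (13/12 + 15/8*t) * WQ t ^ 6 = 0 := by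
  rw [WQ_pow, WQ_pow, sq]
  ext1 <;> simp [OQ, algebraMap_QE]

/-- The surjection `R → QE t` with kernel `(v, p, b)`. -/
def psiE (s t : ℂ) : R4 →ₐ[ℂ] QE t :=
  aeval ![algebraMap ℂ (QE t) s⁻¹ * WQ t, 0,
    (OQ t + algebraMap ℂ (QE t) (t+1/2) * WQ t ^ 3) * WQ t
      + algebraMap ℂ (QE t) ((t+1)/4) * WQ t ^ 4,
    OQ t + algebraMap ℂ (QE t) (t+1/2) * WQ t ^ 3]

variable {s t : ℂ}

lemma psiE_C (z : ℂ) : psiE s t (C z) = algebraMap ℂ (QE t) z := by simp [psiE]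

lemma psiE_w (hs : s ≠ 0) : psiE s t (wE s) = WQ t := by
  simp only [wE, map_mul, psiE_C]
  simp only [psiE, u, aeval_X, Matrix.cons_val_zero]
  rw [← mul_assoc, ← map_mul, mul_inv_cancel₀ hs, map_one, one_mul]

lemma psiE_v : psiE s t v = 0 := by simp [psiE, v]

lemma psiE_y0 (hs : s ≠ 0) : psiE s t (y0E s t) = OQ t := by
  simp only [y0E, map_sub, map_mul, map_pow, psiE_C, psiE_w hs]
  simp [psiE, y]

lemma psiE_b (hs : s ≠ 0) : psiE s t (bE s t) = 0 := by
  rw [bE, ← wE]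
  simp only [map_add, map_neg, map_mul, map_pow, psiE_C, psiE_w hs]
  simp [psiE, y, x]

lemma psiE_p (ht : t ^ 2 = 1/3) (hs : s ≠ 0) : psiE s t (pE s t) = 0 := by
  have := congrArg (psiE s t) (ident1 s t ht)
  simp only [map_add, map_mul, map_pow, psiE_C, psiE_w hs, psiE_b hs, psiE_y0 hs, mul_zero,
    add_zero] at this
  rw [this, ← OQ_sq t]
  simp only [map_add, map_mul]

lemma psiE_c (ht : t ^ 2 = 1/3) (hs : s ≠ 0) :
    psiE s t (cE s t) = algebraMap ℂ (QE t) (3*t/2) * WQ t ^ 5 * OQ t := by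
  have := congrArg (psiE s t) (ident2 s t ht)
  rw [this]
  simp only [map_add, map_sub, map_mul _ (_ : R4) _, map_pow, psiE_C, psiE_w hs, psiE_b hs,
    psiE_y0 hs, psiE_p ht hs]
  ring

/-- The section `q₀ + q₁·ω ↦ q₀(w) + q₁(w)·y₀` of `psiE`. -/
def secE (s t : ℂ) (z : QE t) : R4 :=
  Polynomial.aeval (wE s) z.re + Polynomial.aeval (wE s) z.im * y0E s t

lemma psiE_secE (hs : s ≠ 0) (z : QE t) : psiE s t (secE s t z) = z := by
  have key : ∀ r : Polynomial ℂ, psiE s t (Polynomial.aeval (wE s) r) = ⟨r, 0⟩ := by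
    intro r
    have h : (psiE s t).comp (Polynomial.aeval (wE s)) =
        (Algebra.ofId (Polynomial ℂ) (QE t)).restrictScalars ℂ := by
      apply Polynomial.algHom_ext
      simp only [AlgHom.comp_apply, Polynomial.aeval_X, psiE_w hs]
      rfl
    exact DFunLike.congr_fun h r
  rw [secE, map_add, map_mul, key, key, psiE_y0 hs]
  ext1 <;> simp [OQ]

lemma quad_mem_J (ht : t ^ 2 = 1/3) :
    y0E s t ^ 2 + C (2*t+3/2) * wE s ^ 3 * y0E s t + C (13/12 + 15/8*t) * wE s ^ 6 ∈ JE s t := by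
  rw [← ident1 s t ht]
  exact add_mem (Ideal.subset_span (by simp))
    (Ideal.mul_mem_left _ _ (Ideal.subset_span (by simp)))

lemma mem_J_of_C_mul {z : ℂ} (hz : z ≠ 0) {q : R4} (h : C z * q ∈ JE s t) : q ∈ JE s t := by
  have := Ideal.mul_mem_left _ (C z⁻¹) h
  rwa [← mul_assoc, ← C_mul, inv_mul_cancel₀ hz, C_1, one_mul] at this

lemma w5y0_mem_J (ht : t ^ 2 = 1/3) : wE s ^ 5 * y0E s t ∈ JE s t := by
  have ht0 : 3 * t / 2 ≠ 0 := by
    rintro h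
    have : t = 0 := by simpa using h
    norm_num [this] at ht
  apply mem_J_of_C_mul ht0
  have hb : bE s t ∈ JE s t := Ideal.subset_span (by simp)
  have hp : pE s t ∈ JE s t := Ideal.subset_span (by simp)
  have hc : cE s t ∈ JE s t := Ideal.subset_span (by simp)
  have h2 := ident2 s t ht
  have : C (3*t/2) * (wE s ^ 5 * y0E s t) = cE s t
      - 2 * wE s ^ 2 * (pE s t + C (1/2) * wE s ^ 2 * bE s t)
      + (x + (y * wE s + C ((t+1)/4) * wE s ^ 4) + y * wE s + C (t/4) * wE s ^ 4) * bE s t := by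
    linear_combination -h2
  rw [this]
  exact add_mem (sub_mem hc (Ideal.mul_mem_left _ _ (add_mem hp (Ideal.mul_mem_left _ _ hb))))
    (Ideal.mul_mem_left _ _ hb)

/-- Multiplying the quadratic relation for `y₀` by `w⁵` leaves only its constant term. -/
lemma w11_mem_J (ht : t ^ 2 = 1/3) : wE s ^ 11 ∈ JE s t := by
  have hmu : 13/12 + 15/8*t ≠ 0 := by
    intro h
    -- `(26 + 45t)(26 - 45t) = 1`
    have : (1 : ℂ) = 0 := by
      linear_combination (24 * (26 - 45 * t)) * h + 2025 * ht
    exact one_ne_zero this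
  apply mem_J_of_C_mul hmu
  have : C (13/12 + 15/8*t) * wE s ^ 11 =
      wE s ^ 5 * (y0E s t ^ 2 + C (2*t+3/2) * wE s ^ 3 * y0E s t + C (13/12 + 15/8*t) * wE s ^ 6)
      - (y0E s t + C (2*t+3/2) * wE s ^ 3) * (wE s ^ 5 * y0E s t) := by ring
  rw [this]
  exact sub_mem (Ideal.mul_mem_left _ _ (quad_mem_J ht)) (Ideal.mul_mem_left _ _ (w5y0_mem_J ht))

lemma secE_mul_sub_mem (ht : t ^ 2 = 1/3) (z z' : QE t) :
    secE s t z * secE s t z' - secE s t (z * z') ∈ JE s t := by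
  have : secE s t z * secE s t z' - secE s t (z * z') =
      Polynomial.aeval (wE s) z.im * Polynomial.aeval (wE s) z'.im *
      (y0E s t ^ 2 + C (2*t+3/2) * wE s ^ 3 * y0E s t + C (13/12 + 15/8*t) * wE s ^ 6) := by
    simp only [secE, QuadraticAlgebra.re_mul, QuadraticAlgebra.im_mul, map_add, map_mul, map_neg,
      map_pow, Polynomial.aeval_X, Polynomial.aeval_C, algebraMap_eq]
    ring
  rw [this]
  exact Ideal.mul_mem_left _ _ (quad_mem_J ht)

/-- Every polynomial agrees modulo the ideal with its normal form `secE (psiE q)`. -/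
lemma sub_secE_mem (ht : t ^ 2 = 1/3) (hs : s ≠ 0) (q : R4) :
    q - secE s t (psiE s t q) ∈ JE s t := by
  have hadd : ∀ z z' : QE t, secE s t (z + z') = secE s t z + secE s t z' := by
    intro z z'
    simp only [secE, QuadraticAlgebra.re_add, QuadraticAlgebra.im_add, map_add]
    ring
  have hC : ∀ z : ℂ, secE s t (algebraMap ℂ (QE t) z) = C z := by
    intro z
    simp [secE, algebraMap_QE, algebraMap_eq]
  -- the polynomials with the stated property form a subalgebra
  let A : Subalgebra ℂ R4 :=
    { carrier := {q | q - secE s t (psiE s t q) ∈ JE s t}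
      add_mem' := by
        intro a b ha hb
        have h := (JE s t).add_mem ha hb
        change a + b - secE s t (psiE s t (a + b)) ∈ JE s t
        rw [map_add, hadd]
        convert h using 1
        ring
      mul_mem' := by
        intro a b ha hb
        have h := add_mem (add_mem (Ideal.mul_mem_right b _ ha)
          (Ideal.mul_mem_left _ (secE s t (psiE s t a)) hb))
          (secE_mul_sub_mem (s := s) ht (psiE s t a) (psiE s t b))
        change a * b - secE s t (psiE s t (a * b)) ∈ JE s t
        rw [map_mul]
        convert h using 1
        ring
      algebraMap_mem' := by
        intro z
        change C z - secE s t (psiE s t (C z)) ∈ JE s t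
        rw [psiE_C, hC, sub_self]
        exact zero_mem _ }
  have hmem : ∀ q, q ∈ A ↔ q - secE s t (psiE s t q) ∈ JE s t := fun q => Iff.rfl
  have hCA : ∀ z : ℂ, C z ∈ A := A.algebraMap_mem
  have hw : wE s ∈ A := by
    rw [hmem, psiE_w hs]; simp [secE, WQ]
  have hy0 : y0E s t ∈ A := by
    rw [hmem, psiE_y0 hs]; simp [secE, OQ]
  have hsec0 : secE s t 0 = 0 := by simp [secE]
  have hv : v ∈ A := by
    rw [hmem, psiE_v, hsec0, sub_zero]
    exact Ideal.subset_span (by simp)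
  have hb : bE s t ∈ A := by
    rw [hmem, psiE_b hs, hsec0, sub_zero]
    exact Ideal.subset_span (by simp)
  have hu : u ∈ A := by
    have : u = C s⁻¹ * wE s := by
      rw [wE, ← mul_assoc, ← C_mul, inv_mul_cancel₀ hs, C_1, one_mul]
    rw [this]
    exact mul_mem (hCA _) hw
  have hy : y ∈ A := by
    have : y = y0E s t + C (t + 1/2) * wE s ^ 3 := by rw [y0E]; ring
    rw [this]
    exact add_mem hy0 (mul_mem (hCA _) (pow_mem hw _))
  have hx : x ∈ A := by
    have : x = y * wE s + C ((t+1)/4) * wE s ^ 4 - bE s t := by rw [bE, wE]; ring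
    rw [this]
    exact sub_mem (add_mem (mul_mem hy hw) (mul_mem (hCA _) (pow_mem hw _))) hb
  rw [← hmem]
  induction q using MvPolynomial.induction_on with
  | C z => exact hCA z
  | add q r hq hr => exact add_mem hq hr
  | mul_X q i hq =>
    refine mul_mem hq ?_
    fin_cases i
    exacts [hu, hv, hx, hy]

/-- The coefficients of `q` in the basis `1, w, …, w¹⁰, y₀, w·y₀, …, w⁴·y₀` of `R/(v, p, b, c)`. -/
def phiE (s t : ℂ) : R4 →ₗ[ℂ] (Fin 11 → ℂ) × (Fin 5 → ℂ) where
  toFun q := (fun i => (psiE s t q).re.coeff i, fun i => (psiE s t q).im.coeff i)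
  map_add' q r := by ext <;> simp
  map_smul' z q := by ext <;> simp

lemma phiE_eq_zero_iff_dvd (q : R4) : phiE s t q = 0 ↔
    Polynomial.X ^ 11 ∣ (psiE s t q).re ∧ Polynomial.X ^ 5 ∣ (psiE s t q).im := by
  rw [Polynomial.X_pow_dvd_iff, Polynomial.X_pow_dvd_iff, Prod.ext_iff, funext_iff, funext_iff]
  exact and_congr ⟨fun h d hd => h ⟨d, hd⟩, fun h i => h i i.2⟩
    ⟨fun h d hd => h ⟨d, hd⟩, fun h i => h i i.2⟩

lemma phiE_eq_zero_iff (ht : t ^ 2 = 1/3) (hs : s ≠ 0) (q : R4) :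
    phiE s t q = 0 ↔ q ∈ JE s t := by
  rw [phiE_eq_zero_iff_dvd]
  constructor
  · rintro ⟨⟨g, hg⟩, ⟨k, hk⟩⟩
    have hsec : secE s t (psiE s t q) ∈ JE s t := by
      rw [secE, hg, hk]
      simp only [map_mul, map_pow, Polynomial.aeval_X]
      refine add_mem (Ideal.mul_mem_right _ _ (w11_mem_J ht)) ?_
      rw [mul_right_comm]
      exact Ideal.mul_mem_right _ _ (w5y0_mem_J ht)
    have := add_mem (sub_secE_mem ht hs q) hsec
    rwa [sub_add_cancel] at this
  · intro hq
    have hle : JE s t ≤ (Ideal.span {WQ t ^ 5 * OQ t}).comap (psiE s t) := by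
      rw [JE, Ideal.span_le]
      rintro r (rfl | rfl | rfl | rfl) <;> rw [SetLike.mem_coe, Ideal.mem_comap]
      · rw [psiE_v]; exact zero_mem _
      · rw [psiE_p ht hs]; exact zero_mem _
      · rw [psiE_b hs]; exact zero_mem _
      · rw [psiE_c ht hs, mul_assoc]
        exact Ideal.mul_mem_left _ _ (Ideal.mem_span_singleton_self _)
    have h := hle hq
    rw [Ideal.mem_comap, Ideal.mem_span_singleton] at h
    obtain ⟨z, hz⟩ := h
    rw [hz, WQ_pow]
    constructor
    · refine ⟨-(Polynomial.C (13/12 + 15/8*t)) * z.im, ?_⟩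
      simp [OQ]
      ring
    · refine ⟨z.re - Polynomial.C (2*t+3/2) * Polynomial.X ^ 3 * z.im, ?_⟩
      simp [OQ]
      ring

lemma phiE_surjective (hs : s ≠ 0) : Function.Surjective (phiE s t) := by
  rintro ⟨f, g⟩
  refine ⟨secE s t ⟨Polynomial.ofFn 11 f, Polynomial.ofFn 5 g⟩, ?_⟩
  ext i
  · simp [phiE, psiE_secE hs]
  · simp [phiE, psiE_secE hs]

end Jacobian

/-! ### The dimension count -/

/-- The scalars `tr(d¹·h₀)` are null-homotopic, through the pair `(h₀, adj h₀)`. -/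
lemma scalar_null {s t : ℂ} {e : R4} (he : e ∈ JE s t) : ∃ h0 h1 : Matrix (Fin 2) (Fin 2) R4,
    e • 1 = dE6 s t * h0 + h1 * (dE6 s t).adjugate ∧
    e • 1 = (dE6 s t).adjugate * h1 + h0 * dE6 s t := by
  simp only [JE, Ideal.mem_span_insert, Ideal.mem_span_singleton'] at he
  obtain ⟨a1, z1, ⟨a2, z2, ⟨a3, z3, ⟨a4, rfl⟩, rfl⟩, rfl⟩, rfl⟩ := he
  obtain ⟨η, half⟩ : ∃ η : R4, η * 2 = 1 := ⟨C (1/2), by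
    rw [show (2 : R4) = C 2 from (map_ofNat C 2).symm, ← C_mul]; norm_num⟩
  -- `v` and `p` are half the difference and half the sum of the diagonal entries of `d¹`
  refine ⟨!![η * (a2 - a1), a4; a3, η * (a2 + a1)],
    !![η * (a2 + a1), -a4; -a3, η * (a2 - a1)], ?_, ?_⟩ <;>
  · rw [dE6_eq]
    ext1 i j
    fin_cases i <;> fin_cases j <;> simp [Matrix.adjugate_fin_two] <;>
      first
      | ring1
      | linear_combination (-(a1 * v) - a2 * pE s t) * half

/-- The upper left entry of a null-homotopic endomorphism lies in the ideal of the entries of `d¹`. -/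
lemma null_entry_mem {s t : ℂ} (h0 h1 : Matrix (Fin 2) (Fin 2) R4) :
    (dE6 s t * h0 + h1 * (dE6 s t).adjugate) 0 0 ∈ JE s t := by
  have hv : v ∈ JE s t := Ideal.subset_span (by simp)
  have hb : bE s t ∈ JE s t := Ideal.subset_span (by simp)
  have hp : pE s t ∈ JE s t := Ideal.subset_span (by simp)
  have hc : cE s t ∈ JE s t := Ideal.subset_span (by simp)
  have : (dE6 s t * h0 + h1 * (dE6 s t).adjugate) 0 0 =
      (h1 0 0 - h0 0 0) * v + (h0 0 0 + h1 0 0) * pE s t + h0 1 0 * bE s t - h1 0 1 * cE s t := by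
    rw [dE6_eq]
    simp [-Matrix.cons_mul, Matrix.mul_apply, Fin.sum_univ_two, Matrix.adjugate_fin_two]
    ring
  rw [this]
  exact sub_mem (add_mem (add_mem (Ideal.mul_mem_left _ _ hv) (Ideal.mul_mem_left _ _ hp))
    (Ideal.mul_mem_left _ _ hb)) (Ideal.mul_mem_left _ _ hc)

lemma mem_NullHtpy_iff {s t : ℂ} {f0 f1 : Matrix (Fin 2) (Fin 2) R4} :
    Matrix.fromBlocks f0 0 0 f1 ∈ NullHtpy (DE6 s t) ↔ ∃ h0 h1 : Matrix (Fin 2) (Fin 2) R4,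
      f0 = dE6 s t * h0 + h1 * (dE6 s t).adjugate ∧
      f1 = (dE6 s t).adjugate * h1 + h0 * dE6 s t := by
  constructor
  · rintro ⟨H, h11, h22, hH⟩
    rw [← Matrix.fromBlocks_toBlocks H, h11, h22, DE6, Matrix.fromBlocks_multiply,
      Matrix.fromBlocks_multiply, Matrix.fromBlocks_add, Matrix.fromBlocks_inj] at hH
    exact ⟨H.toBlocks₂₁, H.toBlocks₁₂, by simpa using hH.1, by simpa using hH.2.2.2⟩
  · rintro ⟨h0, h1, e0, e1⟩
    refine ⟨Matrix.fromBlocks 0 h1 h0 0, by simp, by simp, ?_⟩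
    rw [DE6, Matrix.fromBlocks_multiply, Matrix.fromBlocks_multiply, Matrix.fromBlocks_add,
      Matrix.fromBlocks_inj]
    exact ⟨by simpa using e0, by simp, by simp, by simpa using e1⟩

/-- The class of the upper left entry of an even endomorphism in `R/(v, p, b, c)`, in the
coordinates of `phiE`. -/
def PhiE (s t : ℂ) : ↥(EvenEnd (DE6 s t)) →ₗ[ℂ] (Fin 11 → ℂ) × (Fin 5 → ℂ) :=
  phiE s t ∘ₗ Matrix.entryLinearMap ℂ R4 (Sum.inl 0) (Sum.inl 0) ∘ₗ (EvenEnd (DE6 s t)).subtype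

lemma PhiE_apply {s t : ℂ} (F : ↥(EvenEnd (DE6 s t))) :
    PhiE s t F = phiE s t (F.1 (Sum.inl 0) (Sum.inl 0)) := rfl

lemma PhiE_surjective {s t : ℂ} (hs : s ≠ 0) : Function.Surjective (PhiE s t) := by
  intro z
  obtain ⟨q, rfl⟩ := phiE_surjective (t := t) hs z
  refine ⟨⟨q • 1, ?_, ?_, by simp⟩, ?_⟩
  · ext1 i j; simp [Matrix.toBlocks₁₂]
  · ext1 i j; simp [Matrix.toBlocks₂₁]
  · simp [PhiE_apply]

lemma ker_PhiE {s t : ℂ} (ht : t ^ 2 = 1/3) (hs : s ≠ 0) : LinearMap.ker (PhiE s t) =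
    Submodule.comap (EvenEnd (DE6 s t)).subtype (NullHtpy (DE6 s t)) := by
  ext ⟨F, h12, h21, hF⟩
  rw [LinearMap.mem_ker, Submodule.mem_comap, PhiE_apply, phiE_eq_zero_iff ht hs,
    Submodule.subtype_apply]
  have hFb : F = Matrix.fromBlocks F.toBlocks₁₁ 0 0 F.toBlocks₂₂ := by
    conv_lhs => rw [← Matrix.fromBlocks_toBlocks F, h12, h21]
  generalize F.toBlocks₁₁ = f0 at hFb
  generalize F.toBlocks₂₂ = f1 at hFb
  subst hFb
  rw [mem_NullHtpy_iff]
  change f0 0 0 ∈ JE s t ↔ _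
  constructor
  · intro h
    rw [DE6, Matrix.fromBlocks_multiply, Matrix.fromBlocks_multiply, Matrix.fromBlocks_inj] at hF
    have hf : dE6 s t * f1 = f0 * dE6 s t := by simpa using hF.2.1
    obtain ⟨h0, h1, e, e0, e1⟩ := exists_scalar_mod_null s t f0 f1 hf
    have he : e ∈ JE s t := by
      have := sub_mem h (null_entry_mem (s := s) (t := t) h0 h1)
      rw [e0] at this
      simpa using this
    obtain ⟨k0, k1, g0, g1⟩ := scalar_null he
    refine ⟨h0 + k0, h1 + k1, ?_, ?_⟩
    · rw [e0, g0, Matrix.mul_add, Matrix.add_mul]; abel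
    · rw [e1, g1, Matrix.mul_add, Matrix.add_mul]; abel
  · rintro ⟨h0, h1, e0, -⟩
    rw [e0]
    exact null_entry_mem h0 h1

theorem stmt11 (s t : ℂ) (ht : t ^ 2 = 1/3) (hs : s ^ 12 = -576 * (26 * t - 15)) :
    Module.finrank ℂ
      (↥(EvenEnd (DE6 s t)) ⧸
        Submodule.comap (EvenEnd (DE6 s t)).subtype (NullHtpy (DE6 s t))) = 16 := by
  have hs0 : s ≠ 0 := by
    rintro rfl
    -- `t = 15/26` would give `225/676 = 1/3`
    have h : 26 * t - 15 = 0 := by simpa using hs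
    have : (1 : ℂ) = 0 := by linear_combination (3 * (26 * t + 15)) * h - 2028 * ht
    exact one_ne_zero this
  rw [← ker_PhiE ht hs0,
    ((PhiE s t).quotKerEquivOfSurjective (PhiE_surjective hs0)).finrank_eq]
  simp
end
end
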